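/- arXiv:1005.3900 — 4 statements merged into one kernel-verified Lean document; each statement's English description precedes it below -/
import Mathlib

section
/- Let (A, φ) be an algebraic probability space and let K_n^F : Aⁿ → ℂ (n ≥ 1) be the unique family of multilinear functionals satisfying φ(X₁⋯Xₙ) = Σ_{π ∈ NC(n)} K_π^F(X₁, ..., Xₙ) for all n and all X₁, ..., Xₙ ∈ A (the free cumulants). Let n ≥ 2 and X₁, ..., Xₙ ∈ A, and suppose there exist nonempty disjoint sets I, J with I ∪ J = {1,...,n} and freely independent unital subalgebras B₁, B₂ of A such that X_i ∈ B₁ for all i ∈ I and X_j ∈ B₂ for all j ∈ J. Then K_n^F(X₁, ..., Xₙ) = 0. -/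
/-!
Mixed free cumulants vanish by strong induction on the index set `U` of the word.

Suppose first that two neighbouring letters `X i`, `X j` come from the same subalgebra. The cumulant
of the shorter word with these letters multiplied vanishes by induction, and by the formula for
cumulants with products as entries (`blockApply_mul`) it equals the cumulant of the original word
plus products of cumulants over the blocks of two-block partitions separating `i` from `j`. A letter
from the other subalgebra lies in one of these two blocks, together with `i` or `j`, so that block
is mixed and its cumulant vanishes by induction. Hence so does the cumulant of the original word.

Otherwise the word alternates. Cumulants of order at least two vanish if some entry is `1`
(`blockApply_one`), so the letters may be centred (`blockApply_center`), and then freeness makes the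
moment vanish. In its moment–cumulant expansion, every partition other than `{U}` has either a
singleton block, contributing the zero mean of a letter, or a block with two neighbouring points
(`exists_adjacent`), which is mixed and contributes zero by induction. The one remaining term is the
cumulant over `U`.

The formula for products as entries rests on `sum_ncOn_insert`, which fibres
the non-crossing partitions of `U ∪ {j}` over those of `U` by uniting the blocks of the
neighbours `i` and `j`.
-/

open scoped Classical

/-- `π` is a partition of `{1, …, n}`: its blocks are nonempty and every element lies in
exactly one block. -/
def IsPartition {n : ℕ} (π : Finset (Finset (Fin n))) : Prop :=
  (∀ V ∈ π, V.Nonempty) ∧ ∀ i : Fin n, ∃! V, V ∈ π ∧ i ∈ V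

/-- `π` is a non-crossing partition of `{1, …, n}`: there are no `a < b < c < d` with
`a, c` in one block and `b, d` in another block. -/
def IsNonCrossingPartition {n : ℕ} (π : Finset (Finset (Fin n))) : Prop :=
  IsPartition π ∧ ∀ V ∈ π, ∀ W ∈ π, ∀ a ∈ V, ∀ b ∈ W, ∀ c ∈ V, ∀ d ∈ W,
    a < b → b < c → c < d → V = W

/-- `π` is an interval partition of `{1, …, n}`: a partition all of whose blocks are
intervals. -/
def IsIntervalPartition {n : ℕ} (π : Finset (Finset (Fin n))) : Prop :=
  IsPartition π ∧ ∀ V ∈ π, ∃ a b : Fin n, V = Finset.Icc a b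

/-- Given a family `K` of multilinear functionals (`K m` being `(m+1)`-linear, so that
`K_p` for `p ≥ 1` corresponds to `K (p-1)`), the quantity `K_{|W|}(X_W)`, i.e. `K_{|W|}`
applied to `(X_j)_{j ∈ W}` in increasing order of `j` (junk value `1` if `W = ∅`). -/
noncomputable def blockApply {A : Type*} [AddCommMonoid A] [Module ℂ A]
    (K : ∀ m : ℕ, MultilinearMap ℂ (fun _ : Fin (m + 1) => A) ℂ)
    {n : ℕ} (X : Fin n → A) (W : Finset (Fin n)) : ℂ :=
  if h : W.Nonempty then
    K (W.card - 1) (fun j => X (W.orderIsoOfFin rfl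
      ⟨(j : ℕ), by have hj := j.isLt; have hc := Finset.card_pos.mpr h; omega⟩))
  else 1

/-- `K_π(X₁, …, Xₙ) = ∏_{V ∈ π} K_{|V|}(X_V)`. -/
noncomputable def cumPart {A : Type*} [AddCommMonoid A] [Module ℂ A]
    (K : ∀ m : ℕ, MultilinearMap ℂ (fun _ : Fin (m + 1) => A) ℂ)
    {n : ℕ} (X : Fin n → A) (π : Finset (Finset (Fin n))) : ℂ :=
  ∏ V ∈ π, blockApply K X V

/-- The unital subalgebras `A₁, A₂` of `A` are freely independent with respect to `φ`:
`φ(Z₁ ⋯ Zₙ) = 0` for every alternating word (`n ≥ 2`; `false` labels letters from `A₁`,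
`true` letters from `A₂`) all of whose letters are centered. -/
def FreeIndep {A : Type*} [Ring A] [Algebra ℂ A] (φ : A →ₗ[ℂ] ℂ)
    (A₁ A₂ : Subalgebra ℂ A) : Prop :=
  ∀ Z : List (A × Bool), 2 ≤ Z.length →
    Z.Chain' (fun p q => p.2 ≠ q.2) →
    (∀ p ∈ Z, (if p.2 then p.1 ∈ A₂ else p.1 ∈ A₁) ∧ φ p.1 = 0) →
    φ ((Z.map Prod.fst).prod) = 0

/-! ### Non-crossing partitions of subsets -/

/-- `π` is a non-crossing partition of the subset `U` of `Fin n`. Working with subsets of one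
ambient `Fin n` makes restriction to a block free of any relabelling of indices. -/
structure IsNC {n : ℕ} (U : Finset (Fin n)) (π : Finset (Finset (Fin n))) : Prop where
  nonempty : ∀ V ∈ π, V.Nonempty
  sub : ∀ V ∈ π, V ⊆ U
  cover : ∀ x ∈ U, ∃ V ∈ π, x ∈ V
  uniq : ∀ V ∈ π, ∀ W ∈ π, ∀ x, x ∈ V → x ∈ W → V = W
  nc : ∀ V ∈ π, ∀ W ∈ π, ∀ a ∈ V, ∀ b ∈ W, ∀ c ∈ V, ∀ d ∈ W,
    a < b → b < c → c < d → V = W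

/-- The finite set of non-crossing partitions of `U`. -/
noncomputable def ncOn {n : ℕ} (U : Finset (Fin n)) : Finset (Finset (Finset (Fin n))) :=
  Finset.univ.filter (IsNC U)

/-- The product of the `X i`, `i ∈ U`, in increasing order of `i` (so `1` if `U = ∅`). -/
def word {A : Type*} [Monoid A] {n : ℕ} (X : Fin n → A) (U : Finset (Fin n)) : A :=
  (U.sort.map X).prod

theorem mem_ncOn {n : ℕ} {U : Finset (Fin n)} {π : Finset (Finset (Fin n))} :
    π ∈ ncOn U ↔ IsNC U π := by
  simp [ncOn]

/-! ### Cumulants over a subset of the indices -/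

section blockApply

variable {A : Type*} [Ring A] [Algebra ℂ A]
  (K : ∀ m : ℕ, MultilinearMap ℂ (fun _ : Fin (m + 1) => A) ℂ) {n : ℕ}

/-- `blockApply` with an arbitrary name `m + 1` for the cardinality of the block, which avoids the
truncated subtraction of the definition. -/
theorem blockApply_eq (X : Fin n → A) (W : Finset (Fin n)) {m : ℕ} (h : W.card = m + 1) :
    blockApply K X W = K m (fun j => X (W.orderEmbOfFin h j)) := by
  have hW : W.Nonempty := Finset.card_pos.mp (by omega)
  obtain rfl : m = W.card - 1 := by omega
  rw [blockApply, dif_pos hW]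
  rfl

theorem blockApply_eq_of_strictMono (X : Fin n → A) (W : Finset (Fin n)) {m : ℕ}
    (f : Fin (m + 1) → Fin n) (hf : StrictMono f) (hW : Finset.univ.image f = W) :
    blockApply K X W = K m (fun j => X (f j)) := by
  have h : W.card = m + 1 := by
    rw [← hW, Finset.card_image_of_injective _ hf.injective, Finset.card_fin]
  rw [blockApply_eq K X W h,
    Finset.orderEmbOfFin_unique h (f := f) (fun x => by rw [← hW]; simp) hf]

theorem blockApply_image {k : ℕ} (X : Fin n → A) (e : Fin k ↪o Fin n) (V : Finset (Fin k)) :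
    blockApply K (X ∘ e) V = blockApply K X (V.image e) := by
  rcases V.eq_empty_or_nonempty with rfl | hV
  · simp [blockApply]
  · obtain ⟨m, hm⟩ : ∃ m, V.card = m + 1 := ⟨V.card - 1, by have := hV.card_pos; omega⟩
    rw [blockApply_eq K _ V hm, blockApply_eq_of_strictMono K X (V.image e)
      (fun j => e (V.orderEmbOfFin hm j)) (e.strictMono.comp (V.orderEmbOfFin hm).strictMono)]
    · rfl
    · conv_rhs => rw [← Finset.image_orderEmbOfFin_univ V hm, Finset.image_image]
      rfl

theorem blockApply_congr {X Y : Fin n → A} {W : Finset (Fin n)} (h : ∀ i ∈ W, X i = Y i) :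
    blockApply K X W = blockApply K Y W := by
  rcases W.eq_empty_or_nonempty with rfl | hV
  · simp [blockApply]
  · obtain ⟨m, hm⟩ : ∃ m, W.card = m + 1 := ⟨W.card - 1, by have := hV.card_pos; omega⟩
    rw [blockApply_eq K _ W hm, blockApply_eq K _ W hm]
    congr 1
    funext j
    exact h _ (W.orderEmbOfFin_mem hm j)

theorem blockApply_update_sub_smul (X : Fin n → A) {W : Finset (Fin n)} {i : Fin n} (hi : i ∈ W)
    (x y : A) (z : ℂ) :
    blockApply K (Function.update X i (x - z • y)) W =
      blockApply K (Function.update X i x) W - z * blockApply K (Function.update X i y) W := by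
  obtain ⟨m, hm⟩ : ∃ m, W.card = m + 1 := ⟨W.card - 1, by
    have := Finset.card_pos.mpr ⟨i, hi⟩; omega⟩
  obtain ⟨k, hk⟩ : ∃ k, W.orderEmbOfFin hm k = i := by
    have := Finset.range_orderEmbOfFin W hm
    have h2 : i ∈ Set.range (W.orderEmbOfFin hm) := by rw [this]; exact hi
    exact h2
  have key : ∀ a : A, blockApply K (Function.update X i a) W =
      K m (Function.update (X ∘ W.orderEmbOfFin hm) k a) := by
    intro a
    rw [blockApply_eq K _ W hm, ← hk,
      ← Function.update_comp_eq_of_injective X (W.orderEmbOfFin hm).injective]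
    rfl
  rw [key, key, key, MultilinearMap.map_update_sub, MultilinearMap.map_update_smul, smul_eq_mul]

end blockApply

/-! ### Products over a subset of the indices -/

section sorting

variable {A : Type*} [Monoid A] {n : ℕ}

/-- A strictly increasing list is the sorted list of its set of elements. -/
theorem sort_eq_of {U : Finset (Fin n)} {l : List (Fin n)} (hl : l.Pairwise (· < ·))
    (h : ∀ x, x ∈ l ↔ x ∈ U) : U.sort = l := by
  have hn : l.Nodup := hl.imp (fun h => ne_of_lt h)
  refine List.Perm.eq_of_pairwise (le := (· < ·)) (fun a b _ _ h1 h2 => absurd h1 (lt_asymm h2))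
    (Finset.sortedLT_sort U).pairwise hl ?_
  rw [List.perm_ext_iff_of_nodup (U.sort_nodup _) hn]
  intro a
  rw [h, Finset.mem_sort]

/-- If `j` is the successor of `i` in `U ∪ {j}`, replacing the letter at `i` by `X i * X j` and
forgetting position `j` does not change the product. -/
theorem word_update_mul (X : Fin n → A) {U : Finset (Fin n)} {i j : Fin n} (hi : i ∈ U)
    (hij : i < j) (hadj : ∀ k ∈ U, i < k → j < k) :
    word (Function.update X i (X i * X j)) U = word X (insert j U) := by
  obtain ⟨l₁, l₂, hl⟩ := List.append_of_mem ((Finset.mem_sort (· ≤ ·)).2 hi)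
  have hp := (Finset.sortedLT_sort U).pairwise
  have hm : ∀ x, x ∈ U ↔ x ∈ l₁ ++ i :: l₂ := by
    intro x; rw [← hl, Finset.mem_sort]
  rw [hl, List.pairwise_append, List.pairwise_cons] at hp
  obtain ⟨h1, ⟨h2, h3⟩, h4⟩ := hp
  have hs : (insert j U).sort = l₁ ++ i :: j :: l₂ := by
    apply sort_eq_of
    · rw [List.pairwise_append, List.pairwise_cons, List.pairwise_cons]
      refine ⟨h1, ⟨?_, ?_, h3⟩, ?_⟩
      · grind
      · intro a ha
        exact hadj a (by rw [hm]; simp [ha]) (h2 a ha)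
      · grind
    · intro x
      rw [Finset.mem_insert, hm]
      simp only [List.mem_append, List.mem_cons]
      tauto
  have e1 : l₁.map (Function.update X i (X i * X j)) = l₁.map X :=
    List.map_congr_left fun a ha =>
      Function.update_of_ne (ne_of_lt (h4 a ha i (by simp))) _ _
  have e2 : l₂.map (Function.update X i (X i * X j)) = l₂.map X :=
    List.map_congr_left fun a ha => Function.update_of_ne (ne_of_gt (h2 a ha)) _ _
  rw [word, word, hs, hl]
  simp [e1, e2, mul_assoc]

theorem word_insert_one (X : Fin n → A) {U : Finset (Fin n)} {i : Fin n} (hi : i ∉ U)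
    (hX : X i = 1) : word X (insert i U) = word X U := by
  obtain ⟨l₁, l₂, hl⟩ := List.append_of_mem
    ((Finset.mem_sort (· ≤ ·)).2 (Finset.mem_insert_self i U))
  have hp := (Finset.sortedLT_sort (insert i U)).pairwise
  have hm : ∀ x, x ∈ insert i U ↔ x ∈ l₁ ++ i :: l₂ := by
    intro x; rw [← hl, Finset.mem_sort]
  rw [hl, List.pairwise_append, List.pairwise_cons] at hp
  obtain ⟨h1, ⟨h2, h3⟩, h4⟩ := hp
  have hs : U.sort = l₁ ++ l₂ := by
    apply sort_eq_of
    · rw [List.pairwise_append]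
      exact ⟨h1, h3, fun a ha b hb => h4 a ha b (by simp [hb])⟩
    · intro x
      have := hm x
      simp only [List.mem_append, List.mem_cons, Finset.mem_insert] at this ⊢
      grind
  rw [word, word, hs, hl]
  simp [hX]

end sorting

/-! ### The moment–cumulant formula over subsets -/

section moments

variable {A : Type*} [Ring A] [Algebra ℂ A] {φ : A →ₗ[ℂ] ℂ}
  {K : ∀ m : ℕ, MultilinearMap ℂ (fun _ : Fin (m + 1) => A) ℂ} {n : ℕ}

/-- Transporting a partition of `Fin k` along an order embedding with range `U` preserves and
reflects being non-crossing. -/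
theorem isNC_image {k : ℕ} (e : Fin k ↪o Fin n) {U : Finset (Fin n)}
    (hU : Finset.univ.image e = U) (π : Finset (Finset (Fin k))) :
    IsNC U (π.image (Finset.image e)) ↔ IsNonCrossingPartition π := by
  subst hU
  constructor
  · intro h
    refine ⟨⟨?_, ?_⟩, ?_⟩
    · intro V hV
      simpa using h.nonempty _ (Finset.mem_image_of_mem _ hV)
    · intro x
      obtain ⟨W, hW, hx⟩ := h.cover (e x) (by simp)
      obtain ⟨V, hV, rfl⟩ := Finset.mem_image.1 hW
      refine ⟨V, ⟨hV, by simpa using hx⟩, ?_⟩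
      rintro V' ⟨hV', hx'⟩
      exact Finset.image_injective e.injective
        (h.uniq _ (Finset.mem_image_of_mem _ hV') _ hW (e x) (by simpa using hx') hx)
    · intro V hV W hW a ha b hb c hc d hd h1 h2 h3
      exact Finset.image_injective e.injective (h.nc _ (Finset.mem_image_of_mem _ hV) _
        (Finset.mem_image_of_mem _ hW) (e a) (by simpa using ha) (e b) (by simpa using hb)
        (e c) (by simpa using hc) (e d) (by simpa using hd) (by simpa) (by simpa) (by simpa))
  · rintro ⟨⟨h1, h2⟩, h3⟩
    constructor
    · simpa using h1
    · simp only [Finset.forall_mem_image]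
      intro V _ 
      exact Finset.image_subset_image (Finset.subset_univ V)
    · simp only [Finset.forall_mem_image]
      intro x _
      obtain ⟨V, ⟨hV, hx⟩, -⟩ := h2 x
      exact ⟨_, Finset.mem_image_of_mem _ hV, Finset.mem_image_of_mem _ hx⟩
    · simp only [Finset.forall_mem_image]
      intro V hV W hW x hx hx'
      congr 1
      exact (h2 x).unique ⟨hV, hx⟩ ⟨hW, by simpa using hx'⟩
    · simp only [Finset.forall_mem_image]
      intro V hV W hW a ha b hb c hc d hd h4 h5 h6
      congr 1
      exact h3 V hV W hW a ha b hb c hc d hd (by simpa using h4) (by simpa using h5)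
        (by simpa using h6)

/-- The moment–cumulant formula on subsets of `Fin n`, transported from the formula on `Fin (m +
1)` along the increasing enumeration of `U`. -/
theorem moment_cumulant
    (hK : ∀ (m : ℕ) (Y : Fin (m + 1) → A),
      φ ((List.ofFn Y).prod) =
        ∑ π ∈ Finset.univ.filter
            (fun π : Finset (Finset (Fin (m + 1))) => IsNonCrossingPartition π),
          cumPart K Y π)
    (X : Fin n → A) {U : Finset (Fin n)} (hU : U.Nonempty) :
    φ (word X U) = ∑ π ∈ ncOn U, ∏ V ∈ π, blockApply K X V := by
  obtain ⟨m, hm⟩ : ∃ m, U.card = m + 1 := ⟨U.card - 1, by have := hU.card_pos; omega⟩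
  set e := U.orderEmbOfFin hm with he
  have hw : List.ofFn (X ∘ e) = U.sort.map X := by
    rw [← Finset.listMap_orderEmbOfFin_finRange U hm, List.map_map, List.ofFn_eq_map]
  have hinj : Function.Injective (Finset.image e) := Finset.image_injective e.injective
  have himg : Finset.univ.image e = U := Finset.image_orderEmbOfFin_univ U hm
  rw [word, ← hw, hK]
  refine Finset.sum_bij (fun π _ => π.image (Finset.image e)) ?_ ?_ ?_ ?_
  · intro π hπ
    rw [mem_ncOn, isNC_image e himg]
    simpa using hπ
  · intro π _ π' _ h
    exact Finset.image_injective hinj h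
  · intro σ hσ
    rw [mem_ncOn] at hσ
    have hσ' : (σ.image (fun V => Finset.univ.filter (fun x => e x ∈ V))).image
        (Finset.image e) = σ := by
      rw [Finset.image_image]
      conv_rhs => rw [← Finset.image_id (s := σ)]
      refine Finset.image_congr fun V hV => ?_
      ext y
      simp only [Function.comp, Finset.mem_image, Finset.mem_filter, Finset.mem_univ, true_and, id]
      constructor
      · rintro ⟨x, hx, rfl⟩; exact hx
      · intro hy
        have : y ∈ Finset.univ.image e := himg ▸ hσ.sub V hV hy
        obtain ⟨x, -, rfl⟩ := Finset.mem_image.1 this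
        exact ⟨x, hy, rfl⟩
    refine ⟨_, ?_, hσ'⟩
    rw [Finset.mem_filter, ← isNC_image e himg, hσ']
    exact ⟨Finset.mem_univ _, hσ⟩
  · intro π _
    rw [cumPart, Finset.prod_image hinj.injOn]
    exact Finset.prod_congr rfl fun V _ => blockApply_image K X e V

end moments

/-! ### Uniting the blocks of two neighbouring points -/

section merging

variable {n : ℕ}

/-- The block of `σ` containing `i`. It is defined as the union of all blocks containing `i`, so
that it makes sense for an arbitrary family of sets (and is `∅` if no block contains `i`). -/
noncomputable def blockOf (i : Fin n) (σ : Finset (Finset (Fin n))) : Finset (Fin n) :=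
  (σ.filter (i ∈ ·)).sup id

/-- The non-crossing partitions of `V ∪ {j}` all of whose blocks meet `{i, j}`, i.e. those that
become the one-block partition once the blocks of `i` and `j` are united. -/
noncomputable def joined (i j : Fin n) (V : Finset (Fin n)) : Finset (Finset (Finset (Fin n))) :=
  (ncOn (insert j V)).filter (fun ρ => ∀ W ∈ ρ, i ∈ W ∨ j ∈ W)

theorem IsNC.blockOf_eq {U : Finset (Fin n)} {σ : Finset (Finset (Fin n))} (h : IsNC U σ)
    {i : Fin n} {V : Finset (Fin n)} (hV : V ∈ σ) (hi : i ∈ V) : blockOf i σ = V := by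
  have : σ.filter (i ∈ ·) = {V} := by
    ext W
    rw [Finset.mem_filter, Finset.mem_singleton]
    constructor
    · rintro ⟨hW, hiW⟩
      exact h.uniq W hW V hV i hiW hi
    · rintro rfl
      exact ⟨hV, hi⟩
  rw [blockOf, this, Finset.sup_singleton, id]

theorem IsNC.blockOf_spec {U : Finset (Fin n)} {σ : Finset (Finset (Fin n))} (h : IsNC U σ)
    {i : Fin n} (hi : i ∈ U) : blockOf i σ ∈ σ ∧ i ∈ blockOf i σ := by
  obtain ⟨V, hV, hiV⟩ := h.cover i hi
  rw [h.blockOf_eq hV hiV]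
  exact ⟨hV, hiV⟩

/-- Replacing the block `V₀ ∋ i` of a non-crossing partition of `U` by a non-crossing partition of
`V₀ ∪ {j}` gives a non-crossing partition of `U ∪ {j}`, when `j` is the successor of `i`. -/
theorem isNC_split {U : Finset (Fin n)} {i j : Fin n} (hij : i < j)
    (hj : j ∉ U) {σ ρ : Finset (Finset (Fin n))} {V₀ : Finset (Fin n)}
    (hσ : IsNC U σ) (hV₀ : V₀ ∈ σ) (hi : i ∈ V₀) (hρ : IsNC (insert j V₀) ρ)
    (hadj : ∀ k ∈ U, i < k → j < k) :
    IsNC (insert j U) (σ.erase V₀ ∪ ρ) := by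
  -- A block of `σ` other than `V₀` never contains `i` or `j`; a point of a block of `ρ` either
  -- lies in `V₀` or is `j`, and in the second case it may be replaced by its neighbour `i`.
  have hsub : ∀ V ∈ ρ, ∀ x ∈ V, x = j ∨ x ∈ V₀ := fun V hV x hx => by
    simpa using hρ.sub V hV hx
  have hne : ∀ V ∈ σ.erase V₀, ∀ x ∈ V, x ∈ U ∧ x ∉ V₀ ∧ x ≠ j := fun V hV x hx => by
    rw [Finset.mem_erase] at hV
    have hxU := hσ.sub V hV.2 hx
    refine ⟨hxU, fun h => hV.1 (hσ.uniq V hV.2 V₀ hV₀ x hx h), ?_⟩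
    rintro rfl
    exact hj hxU
  have repl : ∀ V ∈ ρ, ∀ x ∈ V, ∃ y ∈ V₀, ∀ k ∈ U, k ∉ V₀ →
      ((k < x ↔ k < y) ∧ (x < k ↔ y < k)) := by
    intro V hV x hx
    rcases hsub V hV x hx with rfl | h
    · refine ⟨i, hi, fun k hk hkV => ?_⟩
      have h1 : k ≠ i := by rintro rfl; exact hkV hi
      have h2 := hadj k hk
      constructor <;> constructor <;> intro h3 <;> grind
    · exact ⟨x, h, fun k _ _ => ⟨Iff.rfl, Iff.rfl⟩⟩
  constructor
  · intro V hV
    rcases Finset.mem_union.1 hV with h | h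
    · exact hσ.nonempty V (Finset.mem_of_mem_erase h)
    · exact hρ.nonempty V h
  · intro V hV
    rcases Finset.mem_union.1 hV with h | h
    · exact (hσ.sub V (Finset.mem_of_mem_erase h)).trans (Finset.subset_insert _ _)
    · exact (hρ.sub V h).trans (Finset.insert_subset_insert _ (hσ.sub V₀ hV₀))
  · intro x hx
    have : x ∈ insert j V₀ ∨ x ∈ U ∧ x ∉ V₀ := by
      rw [Finset.mem_insert] at hx ⊢; tauto
    rcases this with h | ⟨h, h'⟩
    · obtain ⟨V, hV, hxV⟩ := hρ.cover x h
      exact ⟨V, Finset.mem_union_right _ hV, hxV⟩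
    · obtain ⟨V, hV, hxV⟩ := hσ.cover x h
      refine ⟨V, Finset.mem_union_left _ (Finset.mem_erase.2 ⟨?_, hV⟩), hxV⟩
      rintro rfl
      exact h' hxV
  · intro V hV W hW x hxV hxW
    rcases Finset.mem_union.1 hV with h | h <;> rcases Finset.mem_union.1 hW with h' | h'
    · exact hσ.uniq V (Finset.mem_of_mem_erase h) W (Finset.mem_of_mem_erase h') x hxV hxW
    · have := hne V h x hxV
      have := hsub W h' x hxW
      tauto
    · have := hne W h' x hxW
      have := hsub V h x hxV
      tauto
    · exact hρ.uniq V h W h' x hxV hxW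
  · intro V hV W hW a ha b hb c hc d hd h1 h2 h3
    rcases Finset.mem_union.1 hV with h | h <;> rcases Finset.mem_union.1 hW with h' | h'
    · exact hσ.nc V (Finset.mem_of_mem_erase h) W (Finset.mem_of_mem_erase h') a ha b hb c hc d hd
        h1 h2 h3
    · exfalso
      obtain ⟨b', hb', hb''⟩ := repl W h' b hb
      obtain ⟨d', hd', hd''⟩ := repl W h' d hd
      obtain ⟨haU, haV, -⟩ := hne V h a ha
      obtain ⟨hcU, hcV, -⟩ := hne V h c hc
      have := hσ.nc V (Finset.mem_of_mem_erase h) V₀ hV₀ a ha b' hb' c hc d' hd'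
        ((hb'' a haU haV).1.1 h1) ((hb'' c hcU hcV).2.1 h2) ((hd'' c hcU hcV).1.1 h3)
      exact (Finset.ne_of_mem_erase h) this
    · exfalso
      obtain ⟨a', ha', ha''⟩ := repl V h a ha
      obtain ⟨c', hc', hc''⟩ := repl V h c hc
      obtain ⟨hbU, hbV, -⟩ := hne W h' b hb
      obtain ⟨hdU, hdV, -⟩ := hne W h' d hd
      have := hσ.nc V₀ hV₀ W (Finset.mem_of_mem_erase h') a' ha' b hb c' hc' d hd
        ((ha'' b hbU hbV).2.1 h1) ((hc'' b hbU hbV).1.1 h2) ((hc'' d hdU hdV).2.1 h3)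
      exact (Finset.ne_of_mem_erase h') this.symm
    · exact hρ.nc V h W h' a ha b hb c hc d hd h1 h2 h3

/-- Uniting the blocks of two neighbours `i` and `j` of a non-crossing partition, and dropping
`j`, gives a non-crossing partition. Here `V₀` is the united block without `j`. -/
theorem isNC_merge {U : Finset (Fin n)} {i j : Fin n} (hij : i < j) (hi : i ∈ U)
    (hj : j ∉ U) (hadj : ∀ k ∈ U, i < k → j < k)
    {π : Finset (Finset (Fin n))} (hπ : IsNC (insert j U) π) :
    ∃ V₀, i ∈ V₀ ∧ V₀ ∉ π.filter (fun W => ¬ (i ∈ W ∨ j ∈ W)) ∧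
      IsNC U (insert V₀ (π.filter (fun W => ¬ (i ∈ W ∨ j ∈ W)))) ∧
      IsNC (insert j V₀) (π.filter (fun W => i ∈ W ∨ j ∈ W)) := by
  obtain ⟨Vi, hVi, hii⟩ := hπ.cover i (by simp [hi])
  obtain ⟨Vj, hVj, hjj⟩ := hπ.cover j (by simp)
  have hblk : ∀ W ∈ π, (i ∈ W ∨ j ∈ W) → W = Vi ∨ W = Vj := by
    rintro W hW (h | h)
    · exact Or.inl (hπ.uniq W hW Vi hVi i h hii)
    · exact Or.inr (hπ.uniq W hW Vj hVj j h hjj)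
  have hmem : ∀ x, x ∈ (Vi ∪ Vj).erase j ↔ x ≠ j ∧ (x ∈ Vi ∨ x ∈ Vj) := by simp
  have hins : ∀ x, x ∈ insert j ((Vi ∪ Vj).erase j) ↔ x ∈ Vi ∨ x ∈ Vj := by
    intro x; simp only [Finset.mem_insert, hmem]
    by_cases h : x = j
    · subst h; simp [hjj]
    · simp [h]
  have hdis : ∀ W ∈ π, i ∉ W → j ∉ W → ∀ x ∈ W, x ∉ Vi ∧ x ∉ Vj ∧ x ≠ i ∧ x ≠ j ∧ x ∈ U := by
    intro W hW h1 h2 x hx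
    have hx1 : x ≠ i := by rintro rfl; exact h1 hx
    have hx2 : x ≠ j := by rintro rfl; exact h2 hx
    refine ⟨fun h => h1 ?_, fun h => h2 ?_, hx1, hx2, ?_⟩
    · rw [hπ.uniq W hW Vi hVi x hx h]; exact hii
    · rw [hπ.uniq W hW Vj hVj x hx h]; exact hjj
    · have := hπ.sub W hW hx
      rw [Finset.mem_insert] at this; tauto
  -- A block avoiding `i` and `j` and crossing the merged block would cross the block of `i` or the
  -- block of `j`, since the neighbours `i` and `j` lie on the same side of all its points.
  have hcross : ∀ W ∈ π, i ∉ W → j ∉ W → ∀ a c, (a ∈ Vi ∨ a ∈ Vj) → (c ∈ Vi ∨ c ∈ Vj) →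
      ∀ b ∈ W, ∀ d ∈ W, ((a < b ∧ b < c ∧ c < d) ∨ (b < a ∧ a < d ∧ d < c)) → False := by
    intro W hW h1 h2 a c ha hc b hb d hd h
    have nVi : Vi ≠ W := by rintro rfl; exact h1 hii
    have nVj : Vj ≠ W := by rintro rfl; exact h2 hjj
    have A1 := fun a ha b hb c hc d hd h h' h'' =>
      nVi (hπ.nc Vi hVi W hW a ha b hb c hc d hd h h' h'')
    have A2 := fun a ha b hb c hc d hd h h' h'' =>
      nVj (hπ.nc Vj hVj W hW a ha b hb c hc d hd h h' h'')
    have A3 := fun a ha b hb c hc d hd h h' h'' =>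
      nVi (hπ.nc W hW Vi hVi a ha b hb c hc d hd h h' h'').symm
    have A4 := fun a ha b hb c hc d hd h h' h'' =>
      nVj (hπ.nc W hW Vj hVj a ha b hb c hc d hd h h' h'').symm
    obtain ⟨-, -, b1, b2, bU⟩ := hdis W hW h1 h2 b hb
    obtain ⟨-, -, d1, d2, dU⟩ := hdis W hW h1 h2 d hd
    have hb' := hadj b bU
    have hd' := hadj d dU
    have sb : (b < i ∧ b < j) ∨ (i < b ∧ j < b) := by
      rcases lt_or_gt_of_ne b1 with h | h
      · exact Or.inl ⟨h, h.trans hij⟩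
      · exact Or.inr ⟨h, hb' h⟩
    have sd : (d < i ∧ d < j) ∨ (i < d ∧ j < d) := by
      rcases lt_or_gt_of_ne d1 with h | h
      · exact Or.inl ⟨h, h.trans hij⟩
      · exact Or.inr ⟨h, hd' h⟩
    rcases h with ⟨h3, h4, h5⟩ | ⟨h3, h4, h5⟩ <;> rcases ha with ha | ha <;>
      rcases hc with hc | hc <;>
      rcases sb with ⟨p, q⟩ | ⟨p, q⟩ <;> rcases sd with ⟨r, s⟩ | ⟨r, s⟩ <;>
      grind
  refine ⟨(Vi ∪ Vj).erase j, ?_, ?_, ?_, ?_⟩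
  · rw [hmem]; exact ⟨hij.ne, Or.inl hii⟩
  · intro h
    rw [Finset.mem_filter] at h
    exact h.2 (Or.inl ((hmem i).2 ⟨hij.ne, Or.inl hii⟩))
  · constructor
    · intro V hV
      rcases Finset.mem_insert.1 hV with rfl | h
      · exact ⟨i, (hmem i).2 ⟨hij.ne, Or.inl hii⟩⟩
      · exact hπ.nonempty V (Finset.mem_filter.1 h).1
    · intro V hV x hx
      rcases Finset.mem_insert.1 hV with rfl | h
      · obtain ⟨h1, h2⟩ := (hmem x).1 hx
        have : x ∈ insert j U := h2.elim (fun h => hπ.sub Vi hVi h) (fun h => hπ.sub Vj hVj h)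
        rw [Finset.mem_insert] at this; tauto
      · rw [Finset.mem_filter, not_or] at h
        exact (hdis V h.1 h.2.1 h.2.2 x hx).2.2.2.2
    · intro x hx
      obtain ⟨V, hV, hxV⟩ := hπ.cover x (by simp [hx])
      by_cases h : i ∈ V ∨ j ∈ V
      · refine ⟨_, Finset.mem_insert_self _ _, (hmem x).2 ⟨?_, ?_⟩⟩
        · rintro rfl; exact hj hx
        · rcases hblk V hV h with rfl | rfl
          · exact Or.inl hxV
          · exact Or.inr hxV
      · exact ⟨V, Finset.mem_insert_of_mem (Finset.mem_filter.2 ⟨hV, h⟩), hxV⟩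
    · intro V hV W hW x hxV hxW
      rcases Finset.mem_insert.1 hV with rfl | h <;> rcases Finset.mem_insert.1 hW with rfl | h'
      · rfl
      · rw [Finset.mem_filter, not_or] at h'
        have := hdis W h'.1 h'.2.1 h'.2.2 x hxW
        rw [hmem] at hxV; tauto
      · rw [Finset.mem_filter, not_or] at h
        have := hdis V h.1 h.2.1 h.2.2 x hxV
        rw [hmem] at hxW; tauto
      · exact hπ.uniq V (Finset.mem_filter.1 h).1 W (Finset.mem_filter.1 h').1 x hxV hxW
    · intro V hV W hW a ha b hb c hc d hd h1 h2 h3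
      rcases Finset.mem_insert.1 hV with rfl | h <;> rcases Finset.mem_insert.1 hW with rfl | h'
      · rfl
      · rw [Finset.mem_filter, not_or] at h'
        exact (hcross W h'.1 h'.2.1 h'.2.2 a c ((hmem a).1 ha).2 ((hmem c).1 hc).2 b hb d hd
          (Or.inl ⟨h1, h2, h3⟩)).elim
      · rw [Finset.mem_filter, not_or] at h
        exact (hcross V h.1 h.2.1 h.2.2 b d ((hmem b).1 hb).2 ((hmem d).1 hd).2 a ha c hc
          (Or.inr ⟨h1, h2, h3⟩)).elim
      · exact hπ.nc V (Finset.mem_filter.1 h).1 W (Finset.mem_filter.1 h').1 a ha b hb c hc d hd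
          h1 h2 h3
  · constructor
    · intro V hV
      exact hπ.nonempty V (Finset.mem_filter.1 hV).1
    · intro V hV x hx
      rw [Finset.mem_filter] at hV
      rw [hins]
      rcases hblk V hV.1 hV.2 with rfl | rfl
      · exact Or.inl hx
      · exact Or.inr hx
    · intro x hx
      rcases (hins x).1 hx with h | h
      · exact ⟨Vi, Finset.mem_filter.2 ⟨hVi, Or.inl hii⟩, h⟩
      · exact ⟨Vj, Finset.mem_filter.2 ⟨hVj, Or.inr hjj⟩, h⟩
    · intro V hV W hW
      exact hπ.uniq V (Finset.mem_filter.1 hV).1 W (Finset.mem_filter.1 hW).1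
    · intro V hV W hW
      exact hπ.nc V (Finset.mem_filter.1 hV).1 W (Finset.mem_filter.1 hW).1

/-- The non-crossing partitions of `U ∪ {j}` are fibred over those of `U` by uniting the blocks of
the neighbours `i` and `j`; the fibre over `σ` is `joined i j` of the block of `i` in `σ`. -/
theorem sum_ncOn_insert {U : Finset (Fin n)} {i j : Fin n} (hij : i < j) (hi : i ∈ U)
    (hj : j ∉ U) (hadj : ∀ k ∈ U, i < k → j < k) (f : Finset (Fin n) → ℂ) :
    ∑ π ∈ ncOn (insert j U), ∏ V ∈ π, f V =
      ∑ σ ∈ ncOn U, (∏ V ∈ σ.erase (blockOf i σ), f V) *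
        ∑ ρ ∈ joined i j (blockOf i σ), ∏ V ∈ ρ, f V := by
  simp_rw [Finset.mul_sum]
  rw [Finset.sum_sigma']
  symm
  -- The blocks of `ρ` are exactly the blocks of the glued partition that meet `{i, j}`.
  have hfil : ∀ σ ∈ ncOn U, ∀ ρ ∈ joined i j (blockOf i σ),
      (σ.erase (blockOf i σ) ∪ ρ).filter (fun W => i ∈ W ∨ j ∈ W) = ρ ∧
      (σ.erase (blockOf i σ) ∪ ρ).filter (fun W => ¬ (i ∈ W ∨ j ∈ W)) =
        σ.erase (blockOf i σ) := by
    intro σ hσ ρ hρ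
    rw [mem_ncOn] at hσ
    rw [joined, Finset.mem_filter, mem_ncOn] at hρ
    have h1 : ∀ W ∈ σ.erase (blockOf i σ), ¬ (i ∈ W ∨ j ∈ W) := by
      intro W hW
      rw [Finset.mem_erase] at hW
      rintro (h | h)
      · exact hW.1 (hσ.blockOf_eq hW.2 h).symm
      · exact hj (hσ.sub W hW.2 h)
    have h2 := hρ.2
    constructor <;> ext W <;> rw [Finset.mem_filter, Finset.mem_union] <;>
      have h1 := h1 W <;> have h2 := h2 W <;> tauto
  refine Finset.sum_bij (fun p _ => p.1.erase (blockOf i p.1) ∪ p.2) ?_ ?_ ?_ ?_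
  · rintro ⟨σ, ρ⟩ hp
    rw [Finset.mem_sigma, mem_ncOn, joined, Finset.mem_filter, mem_ncOn] at hp
    obtain ⟨hσ, hρ, -⟩ := hp
    rw [mem_ncOn]
    obtain ⟨h1, h2⟩ := hσ.blockOf_spec hi
    exact isNC_split hij hj hσ h1 h2 hρ hadj
  · rintro ⟨σ, ρ⟩ hp ⟨σ', ρ'⟩ hp' heq
    rw [Finset.mem_sigma] at hp hp'
    obtain ⟨hσ, hρ⟩ := hp
    obtain ⟨hσ', hρ'⟩ := hp'
    dsimp only at hσ hρ hσ' hρ' heq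
    obtain ⟨e1, e2⟩ := hfil σ hσ ρ hρ
    obtain ⟨e1', e2'⟩ := hfil σ' hσ' ρ' hρ'
    have hρρ : ρ = ρ' := by rw [← e1, ← e1', heq]
    have hσσ : σ.erase (blockOf i σ) = σ'.erase (blockOf i σ') := by rw [← e2, ← e2', heq]
    have hsup : ∀ τ ∈ ncOn U, ∀ r ∈ joined i j (blockOf i τ), blockOf i τ = (r.sup id).erase j := by
      intro τ hτ r hr
      rw [mem_ncOn] at hτ
      rw [joined, Finset.mem_filter, mem_ncOn] at hr
      ext x
      rw [Finset.mem_erase, Finset.mem_sup]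
      constructor
      · intro hx
        refine ⟨?_, ?_⟩
        · rintro rfl
          exact hj (hτ.sub _ (hτ.blockOf_spec hi).1 hx)
        · obtain ⟨V, hV, hxV⟩ := hr.1.cover x (by simp [hx])
          exact ⟨V, hV, hxV⟩
      · rintro ⟨hxj, V, hV, hxV⟩
        have := hr.1.sub V hV hxV
        rw [Finset.mem_insert] at this
        tauto
    have hb : blockOf i σ = blockOf i σ' := by
      rw [hsup σ hσ ρ hρ, hsup σ' hσ' ρ' hρ', hρρ]
    have hσe : σ = σ' := by
      rw [← Finset.insert_erase ((mem_ncOn.1 hσ).blockOf_spec hi).1, hσσ, hb,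
        Finset.insert_erase ((mem_ncOn.1 hσ').blockOf_spec hi).1]
    subst hσe hρρ
    rfl
  · intro π hπ
    rw [mem_ncOn] at hπ
    obtain ⟨V₀, h1, h2, h3, h4⟩ := isNC_merge hij hi hj hadj hπ
    have hb := h3.blockOf_eq (Finset.mem_insert_self _ _) h1
    refine ⟨⟨insert V₀ (π.filter (fun W => ¬ (i ∈ W ∨ j ∈ W))),
      π.filter (fun W => i ∈ W ∨ j ∈ W)⟩, ?_, ?_⟩
    · rw [Finset.mem_sigma, mem_ncOn]
      refine ⟨h3, ?_⟩
      dsimp only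
      rw [hb, joined, Finset.mem_filter, mem_ncOn]
      exact ⟨h4, fun W hW => (Finset.mem_filter.1 hW).2⟩
    · dsimp only
      rw [hb, Finset.erase_insert h2, Finset.union_comm, Finset.filter_union_filter_not_eq]
  · rintro ⟨σ, ρ⟩ hp
    rw [Finset.mem_sigma] at hp
    obtain ⟨e1, e2⟩ := hfil σ hp.1 ρ hp.2
    dsimp only at e1 e2 hp ⊢
    rw [Finset.prod_union]
    rw [← e1, ← e2]
    exact (Finset.disjoint_filter_filter_not _ _ _).symm

end merging

/-! ### Properties of free cumulants -/

section cumulants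

variable {n : ℕ}

theorem isNC_singleton {U : Finset (Fin n)} (hU : U.Nonempty) : IsNC U {U} := by
  constructor <;> simp_all

theorem IsNC.eq_singleton {U : Finset (Fin n)} {σ : Finset (Finset (Fin n))} (h : IsNC U σ)
    (hU : U ∈ σ) : σ = {U} := by
  refine Finset.eq_singleton_iff_unique_mem.2 ⟨hU, fun V hV => ?_⟩
  obtain ⟨x, hx⟩ := h.nonempty V hV
  exact h.uniq V hV U hU x hx (h.sub V hV hx)

/-- A non-crossing partition of a nonempty set without singleton blocks has two neighbouring
points in a common block: take two points of a common block at minimal distance. A point of `U`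
strictly between them would lie in the same block or have its whole block between them; either way
there would be a closer pair. -/
theorem exists_adjacent {U : Finset (Fin n)} (hU : U.Nonempty) {π : Finset (Finset (Fin n))}
    (hπ : IsNC U π) (h2 : ∀ V ∈ π, ∀ x, V ≠ {x}) :
    ∃ V ∈ π, ∃ i ∈ V, ∃ j ∈ V, i < j ∧ ∀ k ∈ U, i < k → j ≤ k := by
  have other : ∀ V ∈ π, ∀ x ∈ V, ∃ y ∈ V, y ≠ x := by
    intro V hV x hx
    by_contra! hcon
    exact h2 V hV x (Finset.eq_singleton_iff_unique_mem.2 ⟨hx, hcon⟩)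
  let S : Finset (Fin n × Fin n) :=
    Finset.univ.filter (fun p => p.1 < p.2 ∧ ∃ V ∈ π, p.1 ∈ V ∧ p.2 ∈ V)
  have hS : S.Nonempty := by
    obtain ⟨x, hx⟩ := hU
    obtain ⟨V, hV, hxV⟩ := hπ.cover x hx
    obtain ⟨y, hyV, hyx⟩ := other V hV x hxV
    rcases lt_or_gt_of_ne hyx with h | h
    · exact ⟨(y, x), by simp only [S, Finset.mem_filter, Finset.mem_univ, true_and]
                        exact ⟨h, V, hV, hyV, hxV⟩⟩
    · exact ⟨(x, y), by simp only [S, Finset.mem_filter, Finset.mem_univ, true_and]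
                        exact ⟨h, V, hV, hxV, hyV⟩⟩
  obtain ⟨⟨i, j⟩, hp, hmin⟩ := S.exists_min_image (fun p => (p.2 : ℕ) - (p.1 : ℕ)) hS
  have hmin' : ∀ x y, x < y → (∃ V ∈ π, x ∈ V ∧ y ∈ V) → (j : ℕ) - i ≤ (y : ℕ) - x := by
    intro x y hxy h
    exact hmin (x, y) (by simp only [S, Finset.mem_filter, Finset.mem_univ, true_and]
                          exact ⟨hxy, h⟩)
  simp only [S, Finset.mem_filter, Finset.mem_univ, true_and] at hp
  obtain ⟨hij, V, hV, hi, hj⟩ := hp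
  refine ⟨V, hV, i, hi, j, hj, hij, fun k hk hik => ?_⟩
  by_contra! hkj
  obtain ⟨W, hW, hkW⟩ := hπ.cover k hk
  have hVW : V ≠ W := by
    rintro rfl
    have := hmin' i k hik ⟨V, hV, hi, hkW⟩
    rw [Fin.lt_def] at *
    omega
  obtain ⟨l, hl, hlk⟩ := other W hW k hkW
  have hli : l ≠ i := by rintro rfl; exact hVW (hπ.uniq V hV W hW _ hi hl)
  have hlj : l ≠ j := by rintro rfl; exact hVW (hπ.uniq V hV W hW _ hj hl)
  rcases lt_or_gt_of_ne hli with h | h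
  · exact hVW (hπ.nc W hW V hV l hl i hi k hkW j hj h hik hkj).symm
  · rcases lt_or_gt_of_ne hlj with h' | h'
    · rcases lt_or_gt_of_ne hlk with h'' | h''
      · have := hmin' l k h'' ⟨W, hW, hl, hkW⟩
        rw [Fin.lt_def] at *
        omega
      · have := hmin' k l h'' ⟨W, hW, hkW, hl⟩
        rw [Fin.lt_def] at *
        omega
    · exact hVW (hπ.nc V hV W hW i hi k hkW j hj l hl hik hkj h')

variable {A : Type*} [Ring A] [Algebra ℂ A] {φ : A →ₗ[ℂ] ℂ}
  {K : ∀ m : ℕ, MultilinearMap ℂ (fun _ : Fin (m + 1) => A) ℂ}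

/-- The moment–cumulant formula for all nonempty subsets of `Fin n`. -/
def MomentCumulant (φ : A →ₗ[ℂ] ℂ) (K : ∀ m : ℕ, MultilinearMap ℂ (fun _ : Fin (m + 1) => A) ℂ)
    (n : ℕ) : Prop :=
  ∀ (X : Fin n → A) (U : Finset (Fin n)), U.Nonempty →
    φ (word X U) = ∑ π ∈ ncOn U, ∏ V ∈ π, blockApply K X V

/-- The first cumulant is the expectation. -/
theorem blockApply_singleton (h : MomentCumulant φ K n) (X : Fin n → A) (i : Fin n) :
    blockApply K X {i} = φ (X i) := by
  have h1 := h X {i} (Finset.singleton_nonempty i)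
  rw [Finset.sum_eq_single_of_mem {{i}}
    (mem_ncOn.2 (isNC_singleton (Finset.singleton_nonempty i)))] at h1
  · simpa [word] using h1.symm
  · intro π hπ hne
    rw [mem_ncOn] at hπ
    obtain ⟨V, hV, hi⟩ := hπ.cover i (by simp)
    have : V = {i} := Finset.eq_singleton_iff_unique_mem.2
      ⟨hi, fun x hx => by simpa using hπ.sub V hV hx⟩
    subst this
    exact absurd (hπ.eq_singleton hV) hne

/-- Cumulants with a product as an entry. The moment of `X` over `U ∪ {j}` is also the moment of
the merged word over `U`; expanding both and comparing over each partition of `U`, all terms but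
the one of `{U}` cancel by induction. -/
theorem blockApply_mul (h : MomentCumulant φ K n) (X : Fin n → A) {i j : Fin n} (hij : i < j)
    (U : Finset (Fin n)) : i ∈ U → j ∉ U → (∀ k ∈ U, i < k → j < k) →
      blockApply K (Function.update X i (X i * X j)) U =
        ∑ ρ ∈ joined i j U, ∏ V ∈ ρ, blockApply K X V := by
  induction U using Finset.strongInduction with
  | H U ih =>
  intro hi hj hadj
  have hU : U.Nonempty := ⟨i, hi⟩
  have h1 := h (Function.update X i (X i * X j)) U hU
  rw [word_update_mul X hi hij hadj, h X _ (Finset.insert_nonempty j U),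
    sum_ncOn_insert hij hi hj hadj, eq_comm, ← sub_eq_zero, ← Finset.sum_sub_distrib] at h1
  have hterm : ∀ σ ∈ ncOn U,
      (∏ V ∈ σ, blockApply K (Function.update X i (X i * X j)) V) -
        (∏ V ∈ σ.erase (blockOf i σ), blockApply K X V) *
          ∑ ρ ∈ joined i j (blockOf i σ), ∏ V ∈ ρ, blockApply K X V =
      (∏ V ∈ σ.erase (blockOf i σ), blockApply K X V) *
        (blockApply K (Function.update X i (X i * X j)) (blockOf i σ) -
          ∑ ρ ∈ joined i j (blockOf i σ), ∏ V ∈ ρ, blockApply K X V) := by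
    intro σ hσ
    rw [mem_ncOn] at hσ
    rw [mul_sub, ← Finset.prod_erase_mul σ _ (hσ.blockOf_spec hi).1]
    congr 2
    refine Finset.prod_congr rfl fun V hV => blockApply_congr K fun x hx => ?_
    refine Function.update_of_ne ?_ _ _
    rintro rfl
    rw [Finset.mem_erase] at hV
    exact hV.1 (hσ.blockOf_eq hV.2 hx).symm
  rw [Finset.sum_congr rfl hterm, Finset.sum_eq_single_of_mem {U}
    (mem_ncOn.2 (isNC_singleton hU))] at h1
  · rw [(isNC_singleton hU).blockOf_eq (Finset.mem_singleton_self U) hi] at h1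
    simpa [sub_eq_zero] using h1
  · intro σ hσ hne
    rw [mem_ncOn] at hσ
    obtain ⟨h2, h3⟩ := hσ.blockOf_spec hi
    have hss : blockOf i σ ⊂ U := by
      refine (hσ.sub _ h2).ssubset_of_ne fun heq => hne (hσ.eq_singleton (heq ▸ h2))
    rw [ih _ hss h3 (fun h => hj (hss.1 h)) (fun k hk => hadj k (hss.1 hk)), sub_self, mul_zero]

/-- A singleton block can be added to a non-crossing partition. -/
theorem isNC_insert_singleton {U : Finset (Fin n)} {i : Fin n} (hi : i ∉ U)
    {π : Finset (Finset (Fin n))} (hπ : IsNC U π) : IsNC (insert i U) (insert {i} π) := by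
  have hn : ∀ V ∈ π, i ∉ V := fun V hV h => hi (hπ.sub V hV h)
  constructor
  · intro V hV
    rcases Finset.mem_insert.1 hV with rfl | h
    · exact Finset.singleton_nonempty i
    · exact hπ.nonempty V h
  · intro V hV
    rcases Finset.mem_insert.1 hV with rfl | h
    · simp
    · exact (hπ.sub V h).trans (Finset.subset_insert _ _)
  · intro x hx
    rcases Finset.mem_insert.1 hx with rfl | h
    · exact ⟨{x}, by simp⟩
    · obtain ⟨V, hV, hxV⟩ := hπ.cover x h
      exact ⟨V, by simp [hV], hxV⟩
  · intro V hV W hW x hxV hxW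
    rcases Finset.mem_insert.1 hV with rfl | h <;> rcases Finset.mem_insert.1 hW with rfl | h'
    · rfl
    · rw [Finset.mem_singleton] at hxV; subst hxV; exact absurd hxW (hn W h')
    · rw [Finset.mem_singleton] at hxW; subst hxW; exact absurd hxV (hn V h)
    · exact hπ.uniq V h W h' x hxV hxW
  · intro V hV W hW a ha b hb c hc d hd h1 h2 h3
    rcases Finset.mem_insert.1 hV with rfl | h <;> rcases Finset.mem_insert.1 hW with rfl | h'
    · rfl
    · rw [Finset.mem_singleton] at ha hc
      exact absurd (h1.trans h2) (by simp [ha, hc])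
    · rw [Finset.mem_singleton] at hb hd
      exact absurd (h2.trans h3) (by simp [hb, hd])
    · exact hπ.nc V h W h' a ha b hb c hc d hd h1 h2 h3

theorem isNC_erase_singleton {U : Finset (Fin n)} {i : Fin n}
    {π : Finset (Finset (Fin n))} (hπ : IsNC (insert i U) π) (h : {i} ∈ π) (hi : i ∉ U) :
    IsNC U (π.erase {i}) := by
  constructor
  · exact fun V hV => hπ.nonempty V (Finset.mem_of_mem_erase hV)
  · intro V hV x hx
    rw [Finset.mem_erase] at hV
    have := hπ.sub V hV.2 hx
    rw [Finset.mem_insert] at this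
    refine this.resolve_left ?_
    rintro rfl
    exact hV.1 (hπ.uniq V hV.2 _ h x hx (by simp))
  · intro x hx
    obtain ⟨V, hV, hxV⟩ := hπ.cover x (by simp [hx])
    refine ⟨V, Finset.mem_erase.2 ⟨?_, hV⟩, hxV⟩
    rintro rfl
    rw [Finset.mem_singleton] at hxV
    exact hi (hxV ▸ hx)
  · exact fun V hV W hW =>
      hπ.uniq V (Finset.mem_of_mem_erase hV) W (Finset.mem_of_mem_erase hW)
  · exact fun V hV W hW =>
      hπ.nc V (Finset.mem_of_mem_erase hV) W (Finset.mem_of_mem_erase hW)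

/-- A cumulant of order at least two vanishes as soon as one entry is `1`. Deleting the letter `1`
does not change the moment, and the partitions with the singleton block `{i}` already account for
the whole moment over `U`; all others vanish by induction, except possibly the one-block
partition. -/
theorem blockApply_one (hφ : φ 1 = 1) (h : MomentCumulant φ K n) (X : Fin n → A) {i : Fin n}
    (hX : X i = 1) (U : Finset (Fin n)) : i ∉ U → U.Nonempty →
      blockApply K X (insert i U) = 0 := by
  induction U using Finset.strongInduction with
  | H U ih =>
  intro hi hU
  have h1 := h X (insert i U) (Finset.insert_nonempty i U)
  rw [word_insert_one X hi hX, h X U hU,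
    ← Finset.sum_filter_add_sum_filter_not (ncOn (insert i U)) ({i} ∈ ·)] at h1
  have h2 : ∑ π ∈ (ncOn (insert i U)).filter ({i} ∈ ·), ∏ V ∈ π, blockApply K X V =
      ∑ π ∈ ncOn U, ∏ V ∈ π, blockApply K X V := by
    symm
    have hnot : ∀ π ∈ ncOn U, {i} ∉ π := fun π hπ hmem =>
      hi ((mem_ncOn.1 hπ).sub _ hmem (by simp))
    refine Finset.sum_bij' (fun π _ => insert {i} π) (fun π _ => π.erase {i}) ?_ ?_ ?_ ?_ ?_
    · intro π hπ
      rw [Finset.mem_filter, mem_ncOn]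
      exact ⟨isNC_insert_singleton hi (mem_ncOn.1 hπ), Finset.mem_insert_self _ _⟩
    · intro π hπ
      rw [Finset.mem_filter, mem_ncOn] at hπ
      exact mem_ncOn.2 (isNC_erase_singleton hπ.1 hπ.2 hi)
    · intro π hπ
      exact Finset.erase_insert (hnot π hπ)
    · intro π hπ
      exact Finset.insert_erase (Finset.mem_filter.1 hπ).2
    · intro π hπ
      rw [Finset.prod_insert (hnot π hπ), blockApply_singleton h, hX, hφ, one_mul]
  have hne : ({i} : Finset (Fin n)) ≠ insert i U := by
    intro heq
    obtain ⟨x, hx⟩ := hU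
    have : x ∈ ({i} : Finset (Fin n)) := heq ▸ Finset.mem_insert_of_mem hx
    rw [Finset.mem_singleton] at this
    exact hi (this ▸ hx)
  rw [h2, left_eq_add, Finset.sum_eq_single_of_mem {insert i U}] at h1
  · simpa using h1
  · rw [Finset.mem_filter, mem_ncOn]
    exact ⟨isNC_singleton (Finset.insert_nonempty i U), by simpa using hne⟩
  · intro π hπ hπne
    rw [Finset.mem_filter, mem_ncOn] at hπ
    obtain ⟨hπ, hs⟩ := hπ
    obtain ⟨V, hV, hiV⟩ := hπ.cover i (by simp)
    refine Finset.prod_eq_zero hV ?_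
    rw [← Finset.insert_erase hiV]
    refine ih _ ?_ (Finset.notMem_erase _ _) ?_
    · refine Finset.ssubset_iff_subset_ne.2 ⟨?_, ?_⟩
      · rw [← Finset.erase_insert hi]
        exact Finset.erase_subset_erase _ (hπ.sub V hV)
      · intro heq
        apply hπne
        refine hπ.eq_singleton ?_
        rw [← heq, Finset.insert_erase hiV]
        exact hV
    · rw [Finset.nonempty_iff_ne_empty]
      intro he
      apply hs
      rw [← Finset.insert_erase hiV, he] at hV
      simpa using hV

/-- Centring all entries does not change a cumulant of order at least two. -/
theorem blockApply_center (hφ : φ 1 = 1) (h : MomentCumulant φ K n) (X : Fin n → A)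
    {U : Finset (Fin n)} (hU : U.Nontrivial) :
    blockApply K (fun k => X k - φ (X k) • 1) U = blockApply K X U := by
  have key : ∀ T ⊆ U, blockApply K (fun k => if k ∈ T then X k - φ (X k) • 1 else X k) U =
      blockApply K X U := by
    intro T
    induction T using Finset.induction with
    | empty => simp
    | insert a T ha ih =>
      intro hT
      have haU : a ∈ U := hT (Finset.mem_insert_self _ _)
      have ih' := ih ((Finset.subset_insert _ _).trans hT)
      set Y : Fin n → A := fun k => if k ∈ T then X k - φ (X k) • 1 else X k with hY
      have e1 : (fun k => if k ∈ insert a T then X k - φ (X k) • 1 else X k) =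
          Function.update Y a (X a - φ (X a) • 1) := by
        funext k
        by_cases hk : k = a
        · subst hk; simp
        · simp [hk, hY]
      have e2 : Function.update Y a (X a) = Y := by
        rw [Function.update_eq_self_iff]; simp [hY, ha]
      rw [e1, blockApply_update_sub_smul K Y haU, e2, ih', ← Finset.insert_erase haU,
        blockApply_one hφ h _ (Function.update_self a _ _) _ (Finset.notMem_erase a U)
          (hU.erase_nonempty), mul_zero, sub_zero]
  rw [← key U subset_rfl]
  exact blockApply_congr K fun k hk => by simp [hk]

/-- Freeness for words indexed by `U`, where `ℓ k` tells to which subalgebra the letter at `k`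
belongs and neighbouring letters have different labels. -/
theorem map_word_alternating {B₁ B₂ : Subalgebra ℂ A} (hfree : FreeIndep φ B₁ B₂)
    (ℓ : Fin n → Bool) (X : Fin n → A) {U : Finset (Fin n)} (hU : U.Nontrivial)
    (hX : ∀ k ∈ U, if ℓ k then X k ∈ B₂ else X k ∈ B₁) (h0 : ∀ k ∈ U, φ (X k) = 0)
    (halt : ∀ i ∈ U, ∀ j ∈ U, i < j → (∀ k ∈ U, i < k → j ≤ k) → ℓ i ≠ ℓ j) :
    φ (word X U) = 0 := by
  have h := hfree (U.sort.map fun k => (X k, ℓ k)) ?_ ?_ ?_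
  · rw [List.map_map] at h
    exact h
  · rw [List.length_map, Finset.length_sort]
    exact Finset.one_lt_card_iff_nontrivial.2 hU
  · change List.IsChain _ _
    rw [List.isChain_iff_getElem]
    intro p hp
    rw [List.length_map] at hp
    simp only [List.getElem_map]
    have hmono := (Finset.sortedLT_sort U).strictMono_get
    refine halt _ ((Finset.mem_sort (· ≤ ·)).1 (List.getElem_mem _)) _
      ((Finset.mem_sort (· ≤ ·)).1 (List.getElem_mem _)) ?_ ?_
    · exact hmono (a := ⟨p, by omega⟩) (b := ⟨p + 1, hp⟩) (by simp [Fin.lt_def])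
    · intro k hk hlt
      obtain ⟨q, hq, rfl⟩ := List.getElem_of_mem ((Finset.mem_sort (· ≤ ·)).2 hk)
      have h1 : p < q := hmono.lt_iff_lt (a := ⟨p, by omega⟩) (b := ⟨q, hq⟩) |>.1 hlt
      exact hmono.monotone (a := ⟨p + 1, hp⟩) (b := ⟨q, hq⟩) (Fin.mk_le_mk.2 h1)
  · intro p hp
    obtain ⟨k, hk, rfl⟩ := List.mem_map.1 hp
    rw [Finset.mem_sort] at hk
    exact ⟨hX k hk, h0 k hk⟩

/-- Mixed cumulants vanish, for words indexed by a subset `U` of `Fin n` and labelled by `ℓ`; the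
induction runs over `U` with the letters `X` kept arbitrary. -/
theorem blockApply_mixed (hφ : φ 1 = 1) (h : MomentCumulant φ K n)
    {B₁ B₂ : Subalgebra ℂ A} (hfree : FreeIndep φ B₁ B₂) (ℓ : Fin n → Bool)
    (U : Finset (Fin n)) : ∀ X : Fin n → A, (∀ k ∈ U, if ℓ k then X k ∈ B₂ else X k ∈ B₁) →
      (∃ a ∈ U, ∃ b ∈ U, ℓ a ≠ ℓ b) → blockApply K X U = 0 := by
  induction U using Finset.strongInduction with
  | H U ih =>
  rintro X hX ⟨a, ha, b, hb, hab⟩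
  have hUne : U.Nonempty := ⟨a, ha⟩
  have hU : U.Nontrivial := ⟨a, ha, b, hb, fun h => hab (h ▸ rfl)⟩
  by_cases hcase : ∃ i ∈ U, ∃ j ∈ U, i < j ∧ (∀ k ∈ U, i < k → j ≤ k) ∧ ℓ i = ℓ j
  · obtain ⟨i, hi, j, hj, hij, hadj, hl⟩ := hcase
    -- `c` is a point whose letter comes from the other subalgebra than those at `i` and `j`.
    obtain ⟨c, hc, hci⟩ : ∃ c ∈ U, ℓ c ≠ ℓ i := by
      by_cases h1 : ℓ a = ℓ i
      · exact ⟨b, hb, fun h2 => hab (h1.trans h2.symm)⟩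
      · exact ⟨a, ha, h1⟩
    have hcj : c ≠ j := by rintro rfl; exact hci hl.symm
    have hiU : i ∈ U.erase j := Finset.mem_erase.2 ⟨hij.ne, hi⟩
    have h1 := blockApply_mul h X hij (U.erase j) hiU (Finset.notMem_erase _ _)
      (fun k hk hik => lt_of_le_of_ne (hadj k (Finset.mem_of_mem_erase hk) hik)
        (Finset.ne_of_mem_erase hk).symm)
    rw [ih (U.erase j) (Finset.erase_ssubset hj) _ ?_
      ⟨c, Finset.mem_erase.2 ⟨hcj, hc⟩, i, hiU, hci⟩, joined, Finset.insert_erase hj,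
      Finset.sum_eq_single_of_mem {U}] at h1
    · simpa using h1.symm
    · rw [Finset.mem_filter, mem_ncOn]
      exact ⟨isNC_singleton hUne, by simp [hi]⟩
    · intro ρ hρ hne
      rw [Finset.mem_filter, mem_ncOn] at hρ
      obtain ⟨hρ, hmeet⟩ := hρ
      obtain ⟨V, hV, hcV⟩ := hρ.cover c hc
      refine Finset.prod_eq_zero hV (ih V ?_ X (fun k hk => hX k (hρ.sub V hV hk)) ?_)
      · exact (hρ.sub V hV).ssubset_of_ne fun heq => hne (hρ.eq_singleton (heq ▸ hV))
      · rcases hmeet V hV with hiV | hjV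
        · exact ⟨c, hcV, i, hiV, hci⟩
        · exact ⟨c, hcV, j, hjV, hl ▸ hci⟩
    · intro k hk
      have hkU := Finset.mem_of_mem_erase hk
      by_cases hki : k = i
      · subst hki
        have h2 := hX k hi
        have h3 := hX j hj
        rw [← hl] at h3
        rw [Function.update_self]
        split_ifs at h2 h3 ⊢
        · exact mul_mem h2 h3
        · exact mul_mem h2 h3
      · rw [Function.update_of_ne hki]
        exact hX k hkU
  · push Not at hcase
    rw [← blockApply_center hφ h X hU]
    set Y : Fin n → A := fun k => X k - φ (X k) • 1 with hY
    have hY0 : ∀ k, φ (Y k) = 0 := fun k => by simp [hY, hφ]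
    have hYB : ∀ k ∈ U, if ℓ k then Y k ∈ B₂ else Y k ∈ B₁ := by
      intro k hk
      have := hX k hk
      split_ifs at this ⊢
      · exact sub_mem this (B₂.smul_mem B₂.one_mem _)
      · exact sub_mem this (B₁.smul_mem B₁.one_mem _)
    have h1 := h Y U hUne
    rw [map_word_alternating hfree ℓ Y hU hYB (fun k _ => hY0 k) hcase,
      Finset.sum_eq_single_of_mem {U} (mem_ncOn.2 (isNC_singleton hUne))] at h1
    · simpa using h1.symm
    · intro π hπ hne
      rw [mem_ncOn] at hπ
      by_cases hs : ∃ x, {x} ∈ π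
      · obtain ⟨x, hx⟩ := hs
        exact Finset.prod_eq_zero hx (by rw [blockApply_singleton h, hY0])
      · push Not at hs
        obtain ⟨V, hV, i, hi, j, hj, hij, hadj⟩ := exists_adjacent hUne hπ
          (fun V hV x heq => hs x (heq ▸ hV))
        refine Finset.prod_eq_zero hV (ih V ?_ Y (fun k hk => hYB k (hπ.sub V hV hk)) ?_)
        · exact (hπ.sub V hV).ssubset_of_ne fun heq => hne (hπ.eq_singleton (heq ▸ hV))
        · exact ⟨i, hi, j, hj,
            hcase i (hπ.sub V hV hi) j (hπ.sub V hV hj) hij hadj⟩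

end cumulants

/-! ### Vanishing of mixed cumulants -/

/-- Mixed free cumulants of freely independent random variables vanish: if `K` is the
family of free cumulants of `(A, φ)` (i.e. it satisfies the free moment–cumulant formula)
and `X₁, …, Xₙ` (`n ≥ 2`) split into two nonempty groups, indexed by `I` and `J`, lying in
freely independent unital subalgebras `B₁` resp. `B₂`, then `K_n^F(X₁, …, Xₙ) = 0`. -/
theorem free_mixed_cumulant_vanish {A : Type*} [Ring A] [Algebra ℂ A]
    (φ : A →ₗ[ℂ] ℂ) (hφ : φ 1 = 1)
    (K : ∀ m : ℕ, MultilinearMap ℂ (fun _ : Fin (m + 1) => A) ℂ)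
    (hK : ∀ (m : ℕ) (Y : Fin (m + 1) → A),
      φ ((List.ofFn Y).prod) =
        ∑ π ∈ Finset.univ.filter
            (fun π : Finset (Finset (Fin (m + 1))) => IsNonCrossingPartition π),
          cumPart K Y π)
    {n : ℕ} (hn : 2 ≤ n) (X : Fin n → A)
    (I J : Finset (Fin n)) (hI : I.Nonempty) (hJ : J.Nonempty)
    (hIJ : Disjoint I J) (hIJu : I ∪ J = Finset.univ)
    (B₁ B₂ : Subalgebra ℂ A) (hfree : FreeIndep φ B₁ B₂)
    (hXI : ∀ i ∈ I, X i ∈ B₁) (hXJ : ∀ j ∈ J, X j ∈ B₂) :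
    K (n - 1) (fun j => X (Fin.cast (by omega) j)) = 0 := by
  obtain ⟨i, hi⟩ := hI
  obtain ⟨j, hj⟩ := hJ
  have hiJ : i ∉ J := Finset.disjoint_left.1 hIJ hi
  have h := blockApply_mixed hφ (fun X U hU => moment_cumulant hK X hU) hfree
    (fun k => decide (k ∈ J)) Finset.univ X ?_ ⟨i, Finset.mem_univ i, j, Finset.mem_univ j, ?_⟩
  · rw [← h]
    symm
    refine blockApply_eq_of_strictMono K X Finset.univ (m := n - 1) (Fin.cast (by omega)) ?_ ?_
    · exact Fin.cast_strictMono (by omega)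
    · ext k
      simp only [Finset.mem_image, Finset.mem_univ, true_and, iff_true]
      exact ⟨Fin.cast (by omega) k, rfl⟩
  · intro k _
    by_cases hk : k ∈ J
    · simpa [hk] using hXJ k hk
    · have : k ∈ I ∪ J := hIJu ▸ Finset.mem_univ k
      rw [Finset.mem_union] at this
      simpa [hk] using hXI k (this.resolve_right hk)
  · simp [hiJ, hj]
end

section
/- Let (A, φ) be an algebraic probability space and let K_n^B : Aⁿ → ℂ (n ≥ 1) be the unique family of multilinear functionals satisfying φ(X₁⋯Xₙ) = Σ_{π ∈ I(n)} K_π^B(X₁, ..., Xₙ) for all n and all X₁, ..., Xₙ ∈ A (the Boolean cumulants). Let n ≥ 2 and X₁, ..., Xₙ ∈ A, and suppose there exist nonempty disjoint sets I, J with I ∪ J = {1,...,n} and Boolean independent subalgebras B₁, B₂ of A such that X_i ∈ B₁ for all i ∈ I and X_j ∈ B₂ for all j ∈ J. Then K_n^B(X₁, ..., Xₙ) = 0. -/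
/-!
Cut the word `X₁ ⋯ Xₙ` at a place where its letters pass from one subalgebra to the other. Boolean
independence makes the moment the product of the moments of the two pieces (`phi_append`): multiply
together each run of letters from the same subalgebra to make both pieces alternating words, whose
concatenation is again alternating. In the moment-cumulant formula, the interval partitions that
respect the cut correspond to pairs of interval partitions of the pieces, so their total is
exactly that product (`sum_cut`). Hence the partitions that do not respect the cut contribute `0`
in total. Each of these has a block containing both positions next to the cut, hence a mixed
block; unless it is the full block, its cumulant vanishes by strong induction on the length. What
remains is the term of the one-block partition, the cumulant of the whole word (`mixed_vanish`).
-/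

open scoped Classical

/-- The (not necessarily unital) subalgebras `A₁, A₂` of `A` are Boolean independent with
respect to `φ`: `φ(Z₁ ⋯ Zₙ) = φ(Z₁) ⋯ φ(Zₙ)` for every alternating word (`n ≥ 2`; `false`
labels letters from `A₁`, `true` letters from `A₂`). -/
def BooleanIndep {A : Type*} [Ring A] [Algebra ℂ A] (φ : A →ₗ[ℂ] ℂ)
    (A₁ A₂ : NonUnitalSubalgebra ℂ A) : Prop :=
  ∀ Z : List (A × Bool), 2 ≤ Z.length →
    Z.Chain' (fun p q => p.2 ≠ q.2) →
    (∀ p ∈ Z, if p.2 then p.1 ∈ A₂ else p.1 ∈ A₁) →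
    φ ((Z.map Prod.fst).prod) = (Z.map (fun p => φ p.1)).prod

/-! ### Cumulants of blocks -/

/-- The family `K`, evaluated on equal words indexed by types that are only propositionally
equal, gives equal values. -/
theorem K_congr {A : Type*} [AddCommMonoid A] [Module ℂ A]
    (K : ∀ m : ℕ, MultilinearMap ℂ (fun _ : Fin (m + 1) => A) ℂ) {a b : ℕ} (h : a = b)
    (f : Fin (a + 1) → A) (g : Fin (b + 1) → A)
    (hfg : ∀ (j : ℕ) (ha : j < a + 1) (hb : j < b + 1), f ⟨j, ha⟩ = g ⟨j, hb⟩) :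
    K a f = K b g := by
  subst h
  congr 1
  ext ⟨j, hj⟩
  exact hfg j hj hj

/-- `K_{|W|}(X_W)` depends only on the word spelled by the block, hence is unchanged when the
block is moved along an order embedding. -/
theorem blockApply_map {A : Type*} [AddCommMonoid A] [Module ℂ A]
    (K : ∀ m : ℕ, MultilinearMap ℂ (fun _ : Fin (m + 1) => A) ℂ) {p N : ℕ}
    (e : Fin p ↪o Fin N) (X : Fin N → A) (V : Finset (Fin p)) :
    blockApply K X (V.map e.toEmbedding) = blockApply K (fun i => X (e i)) V := by
  unfold blockApply
  by_cases hV : V.Nonempty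
  · have hV' : (V.map e.toEmbedding).Nonempty := by simpa using hV
    rw [dif_pos hV, dif_pos hV']
    have hpos := Finset.card_pos.mpr hV
    have hc : (V.map e.toEmbedding).card = V.card := Finset.card_map _
    refine K_congr K (by rw [hc]) _ _ fun j ha hb => ?_
    simp only [Finset.coe_orderIsoOfFin_apply]
    congr 1
    have key : (V.orderEmbOfFin rfl).trans e = (V.map e.toEmbedding).orderEmbOfFin hc :=
      Finset.orderEmbOfFin_unique' hc fun x => by simp
    have h2 := DFunLike.congr_fun key ⟨j, by omega⟩
    refine Eq.trans ?_ h2.symm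
    exact (Finset.orderEmbOfFin_eq_orderEmbOfFin_iff).2 rfl
  · have hV' : ¬ (V.map e.toEmbedding).Nonempty := by simpa using hV
    rw [dif_neg hV, dif_neg hV']

theorem blockApply_univ {A : Type*} [AddCommMonoid A] [Module ℂ A]
    (K : ∀ m : ℕ, MultilinearMap ℂ (fun _ : Fin (m + 1) => A) ℂ) {m : ℕ}
    (X : Fin (m + 1) → A) : blockApply K X Finset.univ = K m X := by
  unfold blockApply
  rw [dif_pos Finset.univ_nonempty]
  refine K_congr K (by simp) _ _ fun j ha hb => ?_
  simp only [Finset.coe_orderIsoOfFin_apply]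
  congr 1
  have hc : (Finset.univ : Finset (Fin (m + 1))).card = m + 1 := by simp
  have key : RelEmbedding.refl _ = (Finset.univ : Finset (Fin (m + 1))).orderEmbOfFin hc :=
    Finset.orderEmbOfFin_unique' hc fun x => by simp
  have h2 := DFunLike.congr_fun key ⟨j, hb⟩
  refine Eq.trans ?_ h2.symm
  exact (Finset.orderEmbOfFin_eq_orderEmbOfFin_iff).2 rfl

/-! ### Factorization of moments at a change of label -/

/-- `z` belongs to the subalgebra named by its label. -/
def WellLabelled {A : Type*} [Ring A] [Algebra ℂ A] (B₁ B₂ : NonUnitalSubalgebra ℂ A)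
    (z : A × Bool) : Prop := if z.2 then z.1 ∈ B₂ else z.1 ∈ B₁

/-- Multiplying together the runs of equally labelled letters turns a word into an alternating
one with the same product and the same first and last labels. -/
theorem exists_alternating {A : Type*} [Ring A] [Algebra ℂ A]
    (B₁ B₂ : NonUnitalSubalgebra ℂ A) (Z : List (A × Bool)) (hne : Z ≠ [])
    (hZ : ∀ z ∈ Z, WellLabelled B₁ B₂ z) :
    ∃ W : List (A × Bool), W ≠ [] ∧ (∀ z ∈ W, WellLabelled B₁ B₂ z) ∧
      W.IsChain (fun p q => p.2 ≠ q.2) ∧ (W.map Prod.fst).prod = (Z.map Prod.fst).prod ∧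
      W.head?.map Prod.snd = Z.head?.map Prod.snd ∧
      W.getLast?.map Prod.snd = Z.getLast?.map Prod.snd := by
  induction Z with
  | nil => exact absurd rfl hne
  | cons z Z ih =>
    rcases Z with _ | ⟨z', Z⟩
    · exact ⟨[z], by simp, hZ, by simp, rfl, rfl, rfl⟩
    obtain ⟨W, hW, hmem, hch, hprod, hhead, hlast⟩ :=
      ih (by simp) fun y hy => hZ y (List.mem_cons_of_mem _ hy)
    rcases W with _ | ⟨w, W⟩
    · exact absurd rfl hW
    have hz := hZ z (by simp)
    have hw := hmem w (by simp)
    by_cases hzw : z.2 = w.2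
    · refine ⟨(z.1 * w.1, w.2) :: W, by simp, ?_, ?_, ?_, ?_, ?_⟩
      · intro y hy
        rcases List.mem_cons.1 hy with rfl | hy
        · unfold WellLabelled at hz hw ⊢
          rw [hzw] at hz
          cases hb : w.2 <;> simp only [hb] at hz hw ⊢
          · simpa using mul_mem (S := NonUnitalSubalgebra ℂ A) (by simpa using hz) (by simpa using hw)
          · simpa using mul_mem (S := NonUnitalSubalgebra ℂ A) (by simpa using hz) (by simpa using hw)
        · exact hmem y (List.mem_cons_of_mem _ hy)
      · rcases W with _ | ⟨w', W⟩
        · simp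
        · simpa using hch
      · simp only [List.map_cons, List.prod_cons] at hprod ⊢
        rw [mul_assoc, hprod]
      · simp [hzw]
      · rcases W with _ | ⟨w', W⟩
        · simpa using hlast
        · simpa [List.getLast?_cons_cons] using hlast
    · refine ⟨z :: w :: W, by simp, ?_, ?_, ?_, ?_, ?_⟩
      · intro y hy
        rcases List.mem_cons.1 hy with rfl | hy
        · exact hz
        · exact hmem y hy
      · exact List.isChain_cons_cons.2 ⟨hzw, hch⟩
      · rw [List.map_cons, List.prod_cons, hprod]; simp
      · simp
      · simpa [List.getLast?_cons_cons] using hlast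

theorem phi_alternating {A : Type*} [Ring A] [Algebra ℂ A] {φ : A →ₗ[ℂ] ℂ}
    {B₁ B₂ : NonUnitalSubalgebra ℂ A} (hbool : BooleanIndep φ B₁ B₂)
    (W : List (A × Bool)) (hne : W ≠ []) (hch : W.IsChain (fun p q => p.2 ≠ q.2))
    (hW : ∀ z ∈ W, WellLabelled B₁ B₂ z) :
    φ ((W.map Prod.fst).prod) = (W.map (fun p => φ p.1)).prod := by
  rcases W with _ | ⟨w, _ | ⟨w', W⟩⟩
  · exact absurd rfl hne
  · simp
  · exact hbool _ (by simp) hch hW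

/-- A moment factorizes at a place where the label changes. -/
theorem phi_append {A : Type*} [Ring A] [Algebra ℂ A] {φ : A →ₗ[ℂ] ℂ}
    {B₁ B₂ : NonUnitalSubalgebra ℂ A} (hbool : BooleanIndep φ B₁ B₂)
    (P Q : List (A × Bool)) (hP : ∀ z ∈ P, WellLabelled B₁ B₂ z)
    (hQ : ∀ z ∈ Q, WellLabelled B₁ B₂ z) (a b : Bool)
    (ha : P.getLast?.map Prod.snd = some a) (hb : Q.head?.map Prod.snd = some b)
    (hab : a ≠ b) :
    φ ((P.map Prod.fst).prod * (Q.map Prod.fst).prod) =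
      φ ((P.map Prod.fst).prod) * φ ((Q.map Prod.fst).prod) := by
  obtain ⟨U, hU, hUm, hUc, hUp, -, hUl⟩ :=
    exists_alternating B₁ B₂ P (by rintro rfl; simp at ha) hP
  obtain ⟨V, hV, hVm, hVc, hVp, hVh, -⟩ :=
    exists_alternating B₁ B₂ Q (by rintro rfl; simp at hb) hQ
  rw [← hUp, ← hVp, phi_alternating hbool U hU hUc hUm, phi_alternating hbool V hV hVc hVm,
    ← List.prod_append, ← List.prod_append, ← List.map_append, ← List.map_append]
  refine phi_alternating hbool _ (by simp [hU]) (hUc.append hVc ?_) ?_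
  · intro x hx y hy
    rw [ha, Option.mem_def.1 hx] at hUl
    rw [hb, Option.mem_def.1 hy] at hVh
    simp only [Option.map_some, Option.some.injEq] at hUl hVh
    rw [hUl, hVh]
    exact hab
  · intro z hz
    rcases List.mem_append.1 hz with hz | hz
    · exact hUm z hz
    · exact hVm z hz

/-! ### Interval partitions with a prescribed cut -/

/-- For nonempty subsets of `Fin n`, being an interval amounts to order-convexity. -/
theorem isInterval_iff {n : ℕ} {V : Finset (Fin n)} (hV : V.Nonempty) :
    (∃ a b : Fin n, V = Finset.Icc a b) ↔
      ∀ x ∈ V, ∀ y ∈ V, ∀ z, x ≤ z → z ≤ y → z ∈ V := by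
  constructor
  · rintro ⟨a, b, rfl⟩ x hx y hy z hxz hzy
    rw [Finset.mem_Icc] at *
    exact ⟨hx.1.trans hxz, hzy.trans hy.2⟩
  · intro h
    refine ⟨V.min' hV, V.max' hV, ?_⟩
    ext z
    rw [Finset.mem_Icc]
    exact ⟨fun hz => ⟨V.min'_le z hz, V.le_max' z hz⟩,
      fun hz => h _ (V.min'_mem hV) _ (V.max'_mem hV) z hz.1 hz.2⟩

/-- Copy of `V` among the first `p` positions. -/
def leftBlock {p : ℕ} (q : ℕ) (V : Finset (Fin p)) : Finset (Fin (p + q)) :=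
  V.map (Fin.castAddOrderEmb q).toEmbedding

/-- Copy of `V` among the last `q` positions. -/
def rightBlock (p : ℕ) {q : ℕ} (V : Finset (Fin q)) : Finset (Fin (p + q)) :=
  V.map (Fin.natAddOrderEmb p).toEmbedding

theorem mem_leftBlock {p q : ℕ} {V : Finset (Fin p)} {x : Fin (p + q)} :
    x ∈ leftBlock q V ↔ ∃ i ∈ V, Fin.castAdd q i = x := by
  simp only [leftBlock, Finset.mem_map]
  rfl

theorem mem_rightBlock {p q : ℕ} {V : Finset (Fin q)} {x : Fin (p + q)} :
    x ∈ rightBlock p V ↔ ∃ i ∈ V, Fin.natAdd p i = x := by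
  simp only [rightBlock, Finset.mem_map]
  rfl

theorem castAdd_mem_leftBlock {p q : ℕ} {V : Finset (Fin p)} {i : Fin p} :
    Fin.castAdd q i ∈ leftBlock q V ↔ i ∈ V := by
  simp [mem_leftBlock]

theorem natAdd_mem_rightBlock {p q : ℕ} {V : Finset (Fin q)} {i : Fin q} :
    Fin.natAdd p i ∈ rightBlock p V ↔ i ∈ V := by
  simp [mem_rightBlock]

theorem castAdd_notMem_rightBlock {p q : ℕ} {V : Finset (Fin q)} {i : Fin p} :
    Fin.castAdd q i ∉ rightBlock p V := by
  simp only [mem_rightBlock, Fin.ext_iff, Fin.val_natAdd, Fin.val_castAdd, not_exists, not_and]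
  intro j _
  omega

theorem natAdd_notMem_leftBlock {p q : ℕ} {V : Finset (Fin p)} {i : Fin q} :
    Fin.natAdd p i ∉ leftBlock q V := by
  simp only [mem_leftBlock, Fin.ext_iff, Fin.val_natAdd, Fin.val_castAdd, not_exists, not_and]
  intro j _
  omega

theorem leftBlock_injective (p q : ℕ) : Function.Injective (leftBlock (p := p) q) :=
  Finset.map_injective _

theorem rightBlock_injective (p q : ℕ) : Function.Injective (rightBlock p (q := q)) :=
  Finset.map_injective _

theorem leftBlock_ne_rightBlock {p q : ℕ} {V : Finset (Fin p)} {W : Finset (Fin q)}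
    (hV : V.Nonempty) : leftBlock q V ≠ rightBlock p W := by
  obtain ⟨i, hi⟩ := hV
  intro h
  have := castAdd_mem_leftBlock (q := q).2 hi
  rw [h] at this
  exact castAdd_notMem_rightBlock this

theorem leftBlock_interval {p q : ℕ} {V : Finset (Fin p)} (hV : V.Nonempty) :
    (∃ a b, leftBlock q V = Finset.Icc a b) ↔ ∃ a b, V = Finset.Icc a b := by
  rw [isInterval_iff hV, isInterval_iff (by simpa [leftBlock] using hV)]
  constructor
  · intro h x hx y hy z hxz hzy
    exact castAdd_mem_leftBlock.1 (h _ (castAdd_mem_leftBlock.2 hx) _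
      (castAdd_mem_leftBlock.2 hy) (Fin.castAdd q z) hxz hzy)
  · intro h x hx y hy z hxz hzy
    obtain ⟨i, hi, rfl⟩ := mem_leftBlock.1 hx
    obtain ⟨j, hj, rfl⟩ := mem_leftBlock.1 hy
    induction z using Fin.addCases with
    | left k => exact castAdd_mem_leftBlock.2 (h i hi j hj k hxz hzy)
    | right k => simp only [Fin.le_def, Fin.val_natAdd, Fin.val_castAdd] at hzy; omega

theorem rightBlock_interval {p q : ℕ} {V : Finset (Fin q)} (hV : V.Nonempty) :
    (∃ a b, rightBlock p V = Finset.Icc a b) ↔ ∃ a b, V = Finset.Icc a b := by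
  rw [isInterval_iff hV, isInterval_iff (by simpa [rightBlock] using hV)]
  constructor
  · intro h x hx y hy z hxz hzy
    exact natAdd_mem_rightBlock.1 (h _ (natAdd_mem_rightBlock.2 hx) _
      (natAdd_mem_rightBlock.2 hy) (Fin.natAdd p z) (by simpa using hxz) (by simpa using hzy))
  · intro h x hx y hy z hxz hzy
    obtain ⟨i, hi, rfl⟩ := mem_rightBlock.1 hx
    obtain ⟨j, hj, rfl⟩ := mem_rightBlock.1 hy
    induction z using Fin.addCases with
    | left k => simp only [Fin.le_def, Fin.val_natAdd, Fin.val_castAdd] at hxz; omega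
    | right k =>
      exact natAdd_mem_rightBlock.2 (h i hi j hj k (by simpa using hxz) (by simpa using hzy))

/-- Every block of `π` lies on one side of the cut between positions `p` and `p + 1`. -/
def CutAt (p q : ℕ) (π : Finset (Finset (Fin (p + q)))) : Prop :=
  ∀ W ∈ π, (∃ V, W = leftBlock q V) ∨ ∃ V, W = rightBlock p V

/-- An interval meeting both sides of the cut contains both positions adjacent to it. -/
theorem crosses_of_interval {p q : ℕ} {a b : Fin (p + q)}
    (h₁ : ¬ ∃ V, Finset.Icc a b = leftBlock q V) (h₂ : ¬ ∃ V, Finset.Icc a b = rightBlock p V) :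
    (a : ℕ) < p ∧ p ≤ (b : ℕ) := by
  constructor
  · by_contra! ha
    refine h₂ ⟨Finset.univ.filter fun i => Fin.natAdd p i ∈ Finset.Icc a b, ?_⟩
    ext z
    induction z using Fin.addCases with
    | left k =>
      simp only [castAdd_notMem_rightBlock, iff_false, Finset.mem_Icc, Fin.le_def,
        Fin.val_castAdd]
      omega
    | right k => rw [natAdd_mem_rightBlock]; simp
  · by_contra! hb
    refine h₁ ⟨Finset.univ.filter fun i => Fin.castAdd q i ∈ Finset.Icc a b, ?_⟩
    ext z
    induction z using Fin.addCases with
    | left k => rw [castAdd_mem_leftBlock]; simp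
    | right k =>
      simp only [natAdd_notMem_leftBlock, iff_false, Finset.mem_Icc, Fin.le_def,
        Fin.val_natAdd]
      omega

/-- Concatenation of a partition of the first `p` and one of the last `q` positions. -/
noncomputable def joinPart {p q : ℕ} (σ : Finset (Finset (Fin p))) (τ : Finset (Finset (Fin q))) :
    Finset (Finset (Fin (p + q))) :=
  σ.image (leftBlock q) ∪ τ.image (rightBlock p)

theorem mem_joinPart {p q : ℕ} {σ : Finset (Finset (Fin p))} {τ : Finset (Finset (Fin q))}
    {W : Finset (Fin (p + q))} :
    W ∈ joinPart σ τ ↔ (∃ V ∈ σ, leftBlock q V = W) ∨ ∃ V ∈ τ, rightBlock p V = W := by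
  simp [joinPart]

theorem joinPart_isInterval {p q : ℕ} {σ : Finset (Finset (Fin p))}
    {τ : Finset (Finset (Fin q))} (hσ : IsIntervalPartition σ) (hτ : IsIntervalPartition τ) :
    IsIntervalPartition (joinPart σ τ) := by
  obtain ⟨⟨hσ₁, hσ₂⟩, hσ₃⟩ := hσ
  obtain ⟨⟨hτ₁, hτ₂⟩, hτ₃⟩ := hτ
  refine ⟨⟨?_, ?_⟩, ?_⟩
  · intro W hW
    rcases mem_joinPart.1 hW with ⟨V, hV, rfl⟩ | ⟨V, hV, rfl⟩
    · simpa [leftBlock] using hσ₁ V hV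
    · simpa [rightBlock] using hτ₁ V hV
  · intro x
    induction x using Fin.addCases with
    | left i =>
      obtain ⟨V, ⟨hV, hi⟩, hu⟩ := hσ₂ i
      refine ⟨leftBlock q V, ⟨mem_joinPart.2 (.inl ⟨V, hV, rfl⟩), castAdd_mem_leftBlock.2 hi⟩, ?_⟩
      rintro W ⟨hW, hx⟩
      rcases mem_joinPart.1 hW with ⟨V', hV', rfl⟩ | ⟨V', hV', rfl⟩
      · rw [hu V' ⟨hV', castAdd_mem_leftBlock.1 hx⟩]
      · exact absurd hx castAdd_notMem_rightBlock
    | right i =>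
      obtain ⟨V, ⟨hV, hi⟩, hu⟩ := hτ₂ i
      refine ⟨rightBlock p V, ⟨mem_joinPart.2 (.inr ⟨V, hV, rfl⟩), natAdd_mem_rightBlock.2 hi⟩, ?_⟩
      rintro W ⟨hW, hx⟩
      rcases mem_joinPart.1 hW with ⟨V', hV', rfl⟩ | ⟨V', hV', rfl⟩
      · exact absurd hx natAdd_notMem_leftBlock
      · rw [hu V' ⟨hV', natAdd_mem_rightBlock.1 hx⟩]
  · intro W hW
    rcases mem_joinPart.1 hW with ⟨V, hV, rfl⟩ | ⟨V, hV, rfl⟩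
    · exact (leftBlock_interval (hσ₁ V hV)).2 (hσ₃ V hV)
    · exact (rightBlock_interval (hτ₁ V hV)).2 (hτ₃ V hV)

theorem cutAt_joinPart {p q : ℕ} (σ : Finset (Finset (Fin p))) (τ : Finset (Finset (Fin q))) :
    CutAt p q (joinPart σ τ) := by
  intro W hW
  rcases mem_joinPart.1 hW with ⟨V, hV, rfl⟩ | ⟨V, hV, rfl⟩
  · exact .inl ⟨V, rfl⟩
  · exact .inr ⟨V, rfl⟩

/-- The blocks of `π` on the left of the cut. -/
noncomputable def leftPart {p q : ℕ} (π : Finset (Finset (Fin (p + q)))) :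
    Finset (Finset (Fin p)) := Finset.univ.filter fun V => V.Nonempty ∧ leftBlock q V ∈ π

/-- The blocks of `π` on the right of the cut. -/
noncomputable def rightPart {p q : ℕ} (π : Finset (Finset (Fin (p + q)))) :
    Finset (Finset (Fin q)) := Finset.univ.filter fun V => V.Nonempty ∧ rightBlock p V ∈ π

theorem leftPart_joinPart {p q : ℕ} {σ : Finset (Finset (Fin p))} {τ : Finset (Finset (Fin q))}
    (hσ : ∀ V ∈ σ, V.Nonempty) : leftPart (joinPart σ τ) = σ := by
  ext V
  simp only [leftPart, Finset.mem_filter, Finset.mem_univ, true_and, mem_joinPart]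
  constructor
  · rintro ⟨hV, ⟨V', hV', h⟩ | ⟨V', hV', h⟩⟩
    · rwa [← leftBlock_injective p q h]
    · exact absurd h.symm (leftBlock_ne_rightBlock hV)
  · exact fun h => ⟨hσ V h, .inl ⟨V, h, rfl⟩⟩

theorem rightPart_joinPart {p q : ℕ} {σ : Finset (Finset (Fin p))} {τ : Finset (Finset (Fin q))}
    (hσ : ∀ V ∈ σ, V.Nonempty) (hτ : ∀ V ∈ τ, V.Nonempty) : rightPart (joinPart σ τ) = τ := by
  ext V
  simp only [rightPart, Finset.mem_filter, Finset.mem_univ, true_and, mem_joinPart]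
  constructor
  · rintro ⟨hV, ⟨V', hV', h⟩ | ⟨V', hV', h⟩⟩
    · exact absurd h (leftBlock_ne_rightBlock (hσ V' hV'))
    · rwa [← rightBlock_injective p q h]
  · exact fun h => ⟨hτ V h, .inr ⟨V, h, rfl⟩⟩

theorem joinPart_parts {p q : ℕ} {π : Finset (Finset (Fin (p + q)))}
    (hπ : ∀ W ∈ π, W.Nonempty) (hcut : CutAt p q π) :
    joinPart (leftPart π) (rightPart π) = π := by
  ext W
  simp only [mem_joinPart, leftPart, rightPart, Finset.mem_filter, Finset.mem_univ, true_and]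
  constructor
  · rintro (⟨V, ⟨-, h⟩, rfl⟩ | ⟨V, ⟨-, h⟩, rfl⟩) <;> exact h
  · intro hW
    have hne := hπ W hW
    rcases hcut W hW with ⟨V, rfl⟩ | ⟨V, rfl⟩
    · exact .inl ⟨V, ⟨by simpa [leftBlock] using hne, hW⟩, rfl⟩
    · exact .inr ⟨V, ⟨by simpa [rightBlock] using hne, hW⟩, rfl⟩

theorem leftPart_isInterval {p q : ℕ} {π : Finset (Finset (Fin (p + q)))}
    (hπ : IsIntervalPartition π) (hcut : CutAt p q π) : IsIntervalPartition (leftPart π) := by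
  obtain ⟨⟨-, h₂⟩, h₃⟩ := hπ
  simp only [IsIntervalPartition, IsPartition, leftPart, Finset.mem_filter, Finset.mem_univ,
    true_and]
  refine ⟨⟨fun V hV => hV.1, fun i => ?_⟩, fun V hV => (leftBlock_interval hV.1).1 (h₃ _ hV.2)⟩
  obtain ⟨W, ⟨hW, hi⟩, hu⟩ := h₂ (Fin.castAdd q i)
  rcases hcut W hW with ⟨V, rfl⟩ | ⟨V, rfl⟩
  · have hi' := castAdd_mem_leftBlock.1 hi
    refine ⟨V, ⟨⟨⟨i, hi'⟩, hW⟩, hi'⟩, fun V' hV' => ?_⟩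
    exact leftBlock_injective p q (hu _ ⟨hV'.1.2, castAdd_mem_leftBlock.2 hV'.2⟩)
  · exact absurd hi castAdd_notMem_rightBlock

theorem rightPart_isInterval {p q : ℕ} {π : Finset (Finset (Fin (p + q)))}
    (hπ : IsIntervalPartition π) (hcut : CutAt p q π) : IsIntervalPartition (rightPart π) := by
  obtain ⟨⟨-, h₂⟩, h₃⟩ := hπ
  simp only [IsIntervalPartition, IsPartition, rightPart, Finset.mem_filter, Finset.mem_univ,
    true_and]
  refine ⟨⟨fun V hV => hV.1, fun i => ?_⟩, fun V hV => (rightBlock_interval hV.1).1 (h₃ _ hV.2)⟩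
  obtain ⟨W, ⟨hW, hi⟩, hu⟩ := h₂ (Fin.natAdd p i)
  rcases hcut W hW with ⟨V, rfl⟩ | ⟨V, rfl⟩
  · exact absurd hi natAdd_notMem_leftBlock
  · have hi' := natAdd_mem_rightBlock.1 hi
    refine ⟨V, ⟨⟨⟨i, hi'⟩, hW⟩, hi'⟩, fun V' hV' => ?_⟩
    exact rightBlock_injective p q (hu _ ⟨hV'.1.2, natAdd_mem_rightBlock.2 hV'.2⟩)

theorem cumPart_joinPart {A : Type*} [AddCommMonoid A] [Module ℂ A]
    (K : ∀ m : ℕ, MultilinearMap ℂ (fun _ : Fin (m + 1) => A) ℂ) {p q : ℕ}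
    (X : Fin (p + q) → A) {σ : Finset (Finset (Fin p))} {τ : Finset (Finset (Fin q))}
    (hσ : ∀ V ∈ σ, V.Nonempty) :
    cumPart K X (joinPart σ τ) = cumPart K (fun i => X (Fin.castAdd q i)) σ *
      cumPart K (fun i => X (Fin.natAdd p i)) τ := by
  unfold cumPart joinPart
  rw [Finset.prod_union, Finset.prod_image fun _ _ _ _ h => leftBlock_injective p q h,
    Finset.prod_image fun _ _ _ _ h => rightBlock_injective p q h]
  · congr 1
    · exact Finset.prod_congr rfl fun V _ => blockApply_map K (Fin.castAddOrderEmb q) X V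
    · exact Finset.prod_congr rfl fun V _ => blockApply_map K (Fin.natAddOrderEmb p) X V
  · rw [Finset.disjoint_left]
    intro W h₁ h₂
    obtain ⟨V, hV, rfl⟩ := Finset.mem_image.1 h₁
    obtain ⟨V', -, h⟩ := Finset.mem_image.1 h₂
    exact leftBlock_ne_rightBlock (hσ V hV) h.symm

/-- The interval partitions respecting a cut contribute the product of the sums over the interval
partitions of the two sides. -/
theorem sum_cut {A : Type*} [AddCommMonoid A] [Module ℂ A]
    (K : ∀ m : ℕ, MultilinearMap ℂ (fun _ : Fin (m + 1) => A) ℂ) {p q : ℕ}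
    (X : Fin (p + q) → A) :
    ∑ π ∈ Finset.univ.filter (fun π : Finset (Finset (Fin (p + q))) =>
        IsIntervalPartition π ∧ CutAt p q π), cumPart K X π =
      (∑ σ ∈ Finset.univ.filter (fun σ : Finset (Finset (Fin p)) => IsIntervalPartition σ),
        cumPart K (fun i => X (Fin.castAdd q i)) σ) *
      ∑ τ ∈ Finset.univ.filter (fun τ : Finset (Finset (Fin q)) => IsIntervalPartition τ),
        cumPart K (fun i => X (Fin.natAdd p i)) τ := by
  rw [Finset.sum_mul_sum, ← Finset.sum_product']
  refine Finset.sum_bij' (fun π _ => (leftPart π, rightPart π)) (fun στ _ => joinPart στ.1 στ.2)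
    ?_ ?_ ?_ ?_ ?_
  · intro π hπ
    simp only [Finset.mem_filter, Finset.mem_univ, true_and, Finset.mem_product] at hπ ⊢
    exact ⟨leftPart_isInterval hπ.1 hπ.2, rightPart_isInterval hπ.1 hπ.2⟩
  · intro στ h
    simp only [Finset.mem_filter, Finset.mem_univ, true_and, Finset.mem_product] at h ⊢
    exact ⟨joinPart_isInterval h.1 h.2, cutAt_joinPart _ _⟩
  · intro π hπ
    simp only [Finset.mem_filter, Finset.mem_univ, true_and] at hπ
    exact joinPart_parts hπ.1.1.1 hπ.2
  · intro στ h
    simp only [Finset.mem_filter, Finset.mem_univ, true_and, Finset.mem_product] at h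
    exact Prod.ext (leftPart_joinPart h.1.1.1) (rightPart_joinPart h.1.1.1 h.2.1.1)
  · intro π hπ
    simp only [Finset.mem_filter, Finset.mem_univ, true_and] at hπ
    conv_lhs => rw [← joinPart_parts hπ.1.1.1 hπ.2]
    exact cumPart_joinPart K X (leftPart_isInterval hπ.1 hπ.2).1.1

/-! ### Vanishing -/

/-- A nonconstant Boolean word changes label between two consecutive positions. -/
theorem exists_change {m : ℕ} (b : Fin (m + 1) → Bool) (hb : ∃ i j, b i ≠ b j) :
    ∃ k : Fin m, b k.castSucc ≠ b k.succ := by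
  by_contra! h
  have h0 : ∀ i, b i = b 0 := by
    intro i
    induction i using Fin.induction with
    | zero => rfl
    | succ i ih => rw [← h i, ih]
  obtain ⟨i, j, hij⟩ := hb
  exact hij (by rw [h0 i, h0 j])

/-- The vanishing of mixed cumulants, with membership in the two subalgebras recorded by a Boolean
labelling of the letters. -/
theorem mixed_vanish {A : Type*} [Ring A] [Algebra ℂ A] (φ : A →ₗ[ℂ] ℂ)
    (K : ∀ m : ℕ, MultilinearMap ℂ (fun _ : Fin (m + 1) => A) ℂ)
    (hK : ∀ (m : ℕ) (Y : Fin (m + 1) → A),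
      φ ((List.ofFn Y).prod) =
        ∑ π ∈ Finset.univ.filter
            (fun π : Finset (Finset (Fin (m + 1))) => IsIntervalPartition π),
          cumPart K Y π)
    (B₁ B₂ : NonUnitalSubalgebra ℂ A) (hbool : BooleanIndep φ B₁ B₂) (m : ℕ) :
    ∀ (X : Fin (m + 1) → A) (b : Fin (m + 1) → Bool),
      (∀ i, WellLabelled B₁ B₂ (X i, b i)) → (∃ i j, b i ≠ b j) → K m X = 0 := by
  induction m using Nat.strong_induction_on with
  | _ m ih =>
  intro X b hX hb
  obtain ⟨⟨r, hr⟩, hrb⟩ := exists_change b hb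
  obtain ⟨s, rfl⟩ : ∃ s, m = (r + 1) + s := ⟨m - (r + 1), by omega⟩
  -- The length `(r + 1 + s) + 1` of the word is definitionally `(r + 1) + (s + 1)`.
  let p := r + 1
  let q := s + 1
  change Fin (p + q) → A at X
  change Fin (p + q) → Bool at b
  have hfac : φ ((List.ofFn X).prod) =
      φ ((List.ofFn fun i : Fin (r + 1) => X (Fin.castAdd q i)).prod) *
        φ ((List.ofFn fun i : Fin (s + 1) => X (Fin.natAdd p i)).prod) := by
    have h := phi_append hbool
      (List.ofFn fun i : Fin (r + 1) => (X (Fin.castAdd q i), b (Fin.castAdd q i)))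
      (List.ofFn fun i : Fin (s + 1) => (X (Fin.natAdd p i), b (Fin.natAdd p i)))
      (by simp only [List.forall_mem_ofFn_iff]; exact fun i => hX _)
      (by simp only [List.forall_mem_ofFn_iff]; exact fun i => hX _)
      _ _ (by rw [List.getLast?_eq_some_getLast (by simp), List.getLast_ofFn_succ]; rfl)
      (by rw [List.ofFn_succ]; rfl) hrb
    simp only [List.map_ofFn, Function.comp_def] at h
    rw [← h, ← List.prod_append, ← List.ofFn_fin_append]
    congr 2
    exact congrArg List.ofFn (Fin.append_castAdd_natAdd (f := X)).symm
  have hsum : φ ((List.ofFn X).prod) =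
      ∑ π ∈ Finset.univ.filter (fun π : Finset (Finset (Fin (p + q))) =>
        IsIntervalPartition π), cumPart K X π := hK (r + 1 + s) X
  rw [hfac, hK r, hK s, ← Finset.sum_filter_add_sum_filter_not _ (CutAt p q),
    Finset.filter_filter, Finset.filter_filter, sum_cut K X, left_eq_add] at hsum
  -- Among the partitions without the cut only the one-block partition can contribute.
  rw [Finset.sum_eq_single ({Finset.univ} : Finset (Finset (Fin (p + q))))] at hsum
  · rw [cumPart, Finset.prod_singleton] at hsum
    exact (blockApply_univ K (m := r + 1 + s) X).symm.trans hsum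
  · intro π hπ hne
    obtain ⟨-, ⟨⟨h₁, h₂⟩, h₃⟩, hcut⟩ := Finset.mem_filter.1 hπ
    unfold CutAt at hcut
    push Not at hcut
    obtain ⟨W, hW, hWl, hWr⟩ := hcut
    refine Finset.prod_eq_zero hW ?_
    have hWu : W ≠ Finset.univ := by
      rintro rfl
      refine hne (Finset.eq_singleton_iff_unique_mem.2 ⟨hW, fun V hV => ?_⟩)
      obtain ⟨i, hi⟩ := h₁ V hV
      exact (h₂ i).unique ⟨hV, hi⟩ ⟨hW, Finset.mem_univ i⟩
    have hWne := h₁ W hW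
    have hcard : W.card < r + 1 + s + 1 := by
      have := Finset.card_lt_card (Finset.ssubset_univ_iff.2 hWu)
      simp only [Finset.card_univ, Fintype.card_fin, p, q] at this
      omega
    obtain ⟨a, c, rfl⟩ := h₃ W hW
    obtain ⟨hap, hpc⟩ := crosses_of_interval (by simpa using hWl) (by simpa using hWr)
    have hpos := Finset.card_pos.mpr hWne
    rw [blockApply, dif_pos hWne]
    refine ih _ (by omega) _ (fun j => b ((Finset.Icc a c).orderIsoOfFin rfl ⟨j, by omega⟩))
      (fun j => hX _) ?_
    -- Both positions adjacent to the cut are letters of the block.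
    have hmem : ∀ x ∈ Finset.Icc a c, ∃ j : Fin ((Finset.Icc a c).card - 1 + 1),
        ((Finset.Icc a c).orderIsoOfFin rfl ⟨j, by omega⟩ : Fin (p + q)) = x := by
      intro x hx
      let k := ((Finset.Icc a c).orderIsoOfFin rfl).symm ⟨x, hx⟩
      refine ⟨⟨k, by have := k.isLt; omega⟩, ?_⟩
      change (((Finset.Icc a c).orderIsoOfFin rfl k : _) : Fin (p + q)) = x
      simp [k]
    obtain ⟨i, hi⟩ := hmem ⟨r, by omega⟩ (by
      rw [Finset.mem_Icc, Fin.le_def, Fin.le_def]; simp only [p] at hap hpc ⊢; omega)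
    obtain ⟨j, hj⟩ := hmem ⟨r + 1, by omega⟩ (by
      rw [Finset.mem_Icc, Fin.le_def, Fin.le_def]; simp only [p] at hap hpc ⊢; omega)
    refine ⟨i, j, ?_⟩
    simp only [hi, hj]
    exact hrb
  · intro hnot
    exfalso
    apply hnot
    simp only [Finset.mem_filter, Finset.mem_univ, true_and]
    refine ⟨⟨⟨by simp [p], fun i => ⟨Finset.univ, by simp, by simp⟩⟩, ?_⟩, ?_⟩
    · intro V hV
      rw [Finset.mem_singleton.1 hV]
      exact (isInterval_iff ⟨⟨0, by omega⟩, Finset.mem_univ _⟩).2 (by simp)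
    · intro h
      rcases h _ (Finset.mem_singleton_self _) with ⟨V, hV⟩ | ⟨V, hV⟩
      · have := Finset.mem_univ (Fin.natAdd p (0 : Fin (s + 1)))
        rw [hV] at this
        exact natAdd_notMem_leftBlock this
      · have := Finset.mem_univ (Fin.castAdd q (0 : Fin (r + 1)))
        rw [hV] at this
        exact castAdd_notMem_rightBlock this

/-- Mixed Boolean cumulants of Boolean independent random variables vanish: if `K` is the
family of Boolean cumulants of `(A, φ)` (i.e. it satisfies the Boolean moment–cumulant
formula) and `X₁, …, Xₙ` (`n ≥ 2`) split into two nonempty groups, indexed by `I` and `J`,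
lying in Boolean independent subalgebras `B₁` resp. `B₂`, then `K_n^B(X₁, …, Xₙ) = 0`. -/
theorem boolean_mixed_cumulant_vanish {A : Type*} [Ring A] [Algebra ℂ A]
    (φ : A →ₗ[ℂ] ℂ) (hφ : φ 1 = 1)
    (K : ∀ m : ℕ, MultilinearMap ℂ (fun _ : Fin (m + 1) => A) ℂ)
    (hK : ∀ (m : ℕ) (Y : Fin (m + 1) → A),
      φ ((List.ofFn Y).prod) =
        ∑ π ∈ Finset.univ.filter
            (fun π : Finset (Finset (Fin (m + 1))) => IsIntervalPartition π),
          cumPart K Y π)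
    {n : ℕ} (hn : 2 ≤ n) (X : Fin n → A)
    (I J : Finset (Fin n)) (hI : I.Nonempty) (hJ : J.Nonempty)
    (hIJ : Disjoint I J) (hIJu : I ∪ J = Finset.univ)
    (B₁ B₂ : NonUnitalSubalgebra ℂ A) (hbool : BooleanIndep φ B₁ B₂)
    (hXI : ∀ i ∈ I, X i ∈ B₁) (hXJ : ∀ j ∈ J, X j ∈ B₂) :
    K (n - 1) (fun j => X (Fin.cast (by omega) j)) = 0 := by
  obtain ⟨m, rfl⟩ : ∃ m, n = m + 1 := ⟨n - 1, by omega⟩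
  refine mixed_vanish φ K hK B₁ B₂ hbool m X (fun i => decide (i ∈ J)) ?_ ?_
  · intro i
    unfold WellLabelled
    by_cases hi : i ∈ J
    · simpa [hi] using hXJ i hi
    · have hiI : i ∈ I := by
        have := Finset.mem_univ i
        rw [← hIJu, Finset.mem_union] at this
        exact this.resolve_right hi
      simpa [hi] using hXI i hiI
  · obtain ⟨i, hi⟩ := hI
    obtain ⟨j, hj⟩ := hJ
    exact ⟨i, j, by simp [hj, Finset.disjoint_left.1 hIJ hi]⟩
end

section
/- Let (A, φ) be an algebraic probability space and define the third monotone cumulant K₃^M(X₁, X₂, X₃) := φ(X₁X₂X₃) − φ(X₁X₂)φ(X₃) − φ(X₁)φ(X₂X₃) − (1/2)φ(X₁X₃)φ(X₂) + (3/2)φ(X₁)φ(X₂)φ(X₃). If X, Y ∈ A are such that the ordered pair of (non-unital) subalgebras generated by X and by Y is monotone independent, then K₃^M(X, Y, X) = (1/2)(φ(X²)φ(Y) − φ(X)φ(Y)φ(X)); in particular, the mixed monotone cumulant of monotone independent random variables need not vanish. -/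
/-!
Monotone independence lets `φ Y` be pulled out of each of the words `X Y X`, `X Y` and `Y X`, so
`φ (X Y X) = φ Y φ (X²)` and `φ (X Y) = φ (Y X) = φ Y φ X`. Substituting these into the
definition of the cumulant leaves a polynomial identity in `φ X`, `φ Y` and `φ (X²)`.
-/

/-- Monotone independence of the ordered pair of non-unital subalgebras `(A₁, A₂)`:
see the paper's definition; `false` labels letters from `A₁`, `true` letters from `A₂`. -/
def MonotoneIndep {A : Type*} [Ring A] [Algebra ℂ A] (φ : A →ₗ[ℂ] ℂ)
    (A₁ A₂ : NonUnitalSubalgebra ℂ A) : Prop :=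
  ∀ Z : List (A × Bool), 2 ≤ Z.length →
    Z.Chain' (fun p q => p.2 ≠ q.2) →
    (∀ p ∈ Z, if p.2 then p.1 ∈ A₂ else p.1 ∈ A₁) →
    ∀ i : Fin Z.length, (Z.get i).2 = true →
      φ ((Z.map Prod.fst).prod) =
        φ (Z.get i).1 * φ (((Z.eraseIdx i).map Prod.fst).prod)


/-- The third monotone cumulant
`K₃^M(X₁,X₂,X₃) = φ(X₁X₂X₃) − φ(X₁X₂)φ(X₃) − φ(X₁)φ(X₂X₃) − ½ φ(X₁X₃)φ(X₂)
  + (3/2) φ(X₁)φ(X₂)φ(X₃)`. -/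
noncomputable def K3M {A : Type*} [Ring A] [Algebra ℂ A] (φ : A →ₗ[ℂ] ℂ)
    (X₁ X₂ X₃ : A) : ℂ :=
  φ (X₁ * X₂ * X₃) - φ (X₁ * X₂) * φ X₃ - φ X₁ * φ (X₂ * X₃)
    - (1 / 2) * (φ (X₁ * X₃) * φ X₂) + (3 / 2) * (φ X₁ * φ X₂ * φ X₃)

/-- If the non-unital subalgebras generated by `X` and by `Y` are monotone independent
(in this order), then `K₃^M(X, Y, X) = ½ (φ(X²)φ(Y) − φ(X)φ(Y)φ(X))`; in particular the
mixed monotone cumulant of monotone independent random variables need not vanish. -/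
theorem K3M_monotoneIndep {A : Type*} [Ring A] [Algebra ℂ A]
    (φ : A →ₗ[ℂ] ℂ) (hφ : φ 1 = 1) (X Y : A)
    (h : MonotoneIndep φ (NonUnitalAlgebra.adjoin ℂ {X}) (NonUnitalAlgebra.adjoin ℂ {Y})) :
    K3M φ X Y X = (1 / 2) * (φ (X ^ 2) * φ Y - φ X * φ Y * φ X) := by
  have hX : X ∈ NonUnitalAlgebra.adjoin ℂ {X} :=
    NonUnitalAlgebra.subset_adjoin ℂ (Set.mem_singleton X)
  have hY : Y ∈ NonUnitalAlgebra.adjoin ℂ {Y} :=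
    NonUnitalAlgebra.subset_adjoin ℂ (Set.mem_singleton Y)
  have hXYX : φ (X * Y * X) = φ Y * φ (X * X) := by
    simpa [mul_assoc] using h [(X, false), (Y, true), (X, false)] (by simp) (by simp [List.Chain'])
      (by simp [hX, hY]) ⟨1, by simp⟩ (by simp)
  have hXY : φ (X * Y) = φ Y * φ X := by
    simpa using h [(X, false), (Y, true)] (by simp) (by simp [List.Chain'])
      (by simp [hX, hY]) ⟨1, by simp⟩ (by simp)
  have hYX : φ (Y * X) = φ Y * φ X := by
    simpa using h [(Y, true), (X, false)] (by simp) (by simp [List.Chain'])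
      (by simp [hX, hY]) ⟨0, by simp⟩ (by simp)
  rw [K3M, hXYX, hXY, hYX, pow_two]
  ring
end

section
/- Let (A, φ) be an algebraic probability space. Then there exists a unique family of multilinear functionals K_n^F : Aⁿ → ℂ (n ≥ 1) such that for every n ≥ 1 and all X₁, ..., Xₙ ∈ A, φ(X₁⋯Xₙ) = Σ_{π ∈ NC(n)} K_π^F(X₁, ..., Xₙ) (the free moment–cumulant formula). -/
/-!
The one-block partition is non-crossing and contributes exactly `K n X` to the formula for
`φ (X₀ ⋯ Xₙ)`, while every block of any other partition is a proper subset, so that the remaining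
terms involve only `K m` with `m < n`. The formula is therefore equivalent to the triangular system
`K n X = φ (X₀ ⋯ Xₙ) - ∑_{π ≠ {univ}} K_π (X)` (`cumulantStep`), whose right-hand side is determined
by the lower functionals. Such a system has exactly one solution, by strong recursion
(`existsUnique_fixed_of_local`). The right-hand side is multilinear because each
`X ↦ K_π (X)` is: an argument `X i` enters exactly one factor of the product, namely the one of the
block containing `i`, and enters it linearly (`cumPartMultilinear`).
-/

open scoped Classical

/-- A triangular system `f n = T f n`, in which `T f n` depends only on `f m` for `m < n`, has
exactly one solution. -/
theorem existsUnique_fixed_of_local {β : ℕ → Type*} [∀ n, Inhabited (β n)]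
    (T : (∀ n, β n) → ∀ n, β n)
    (hT : ∀ f g n, (∀ m < n, f m = g m) → T f n = T g n) :
    ∃! f : ∀ n, β n, ∀ n, f n = T f n := by
  -- the recursion extends the values already constructed by arbitrary ones, which `T` ignores
  let F : ∀ n, (∀ m, m < n → β m) → β n :=
    fun n r => T (fun m => if h : m < n then r m h else default) n
  have hF : ∀ n, (Nat.strongRec F n : β n) = F n (fun m _ => Nat.strongRec F m) :=
    fun n => Nat.strongRec_eq F n
  refine ⟨fun n => Nat.strongRec F n, fun n => ?_, fun g hg => ?_⟩
  · refine (hF n).trans (hT _ _ n fun m hm => ?_)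
    simp [hm]
  · funext n
    induction n using Nat.strong_induction_on with
    | _ n ih =>
      refine (hg n).trans (Eq.trans ?_ (hF n).symm)
      refine hT _ _ n fun m hm => ?_
      simp [hm, ih m hm]

section

variable {A : Type*} [AddCommMonoid A] [Module ℂ A]
  (K : ∀ m : ℕ, MultilinearMap ℂ (fun _ : Fin (m + 1) => A) ℂ)

theorem blockApply_update_of_notMem {n : ℕ} (X : Fin n → A) {V : Finset (Fin n)} {i : Fin n}
    (hi : i ∉ V) (x : A) : blockApply K (Function.update X i x) V = blockApply K X V := by
  unfold blockApply
  split_ifs with h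
  · congr 1
    funext j
    refine Function.update_of_ne ?_ _ _
    rintro rfl
    exact hi (Subtype.prop _)
  · rfl

/-- As a function of the argument `X i` with `i ∈ V`, `blockApply K X V` is the value of the
multilinear map `K (V.card - 1)` with one argument, the same for all values of `X i`, updated. -/
theorem exists_blockApply_update {n : ℕ} (X : Fin n → A) {V : Finset (Fin n)} {i : Fin n}
    (hi : i ∈ V) : ∃ (Y : Fin (V.card - 1 + 1) → A) (j : Fin (V.card - 1 + 1)),
      ∀ x, blockApply K (Function.update X i x) V
        = K (V.card - 1) (Function.update Y j x) := by
  have h : V.Nonempty := ⟨i, hi⟩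
  have hc : V.card - 1 + 1 = V.card := Nat.sub_add_cancel (Finset.card_pos.mpr h)
  let e : Fin (V.card - 1 + 1) → Fin n := fun j => V.orderIsoOfFin rfl (Fin.cast hc j)
  have he : Function.Injective e := fun a b hab =>
    Fin.cast_injective hc ((V.orderIsoOfFin rfl).injective (Subtype.ext hab))
  obtain ⟨j, hj⟩ : ∃ j, e j = i :=
    ⟨Fin.cast hc.symm ((V.orderIsoOfFin rfl).symm ⟨i, hi⟩),
      congrArg Subtype.val ((V.orderIsoOfFin rfl).apply_symm_apply ⟨i, hi⟩)⟩
  refine ⟨X ∘ e, j, fun x => ?_⟩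
  rw [blockApply, dif_pos h, ← Function.update_comp_eq_of_injective X he j x, hj]
  rfl

/-- For a partition `π`, only the factor of the block containing `i` depends on `X i`. -/
theorem exists_cumPart_update {n : ℕ} (X : Fin n → A) {π : Finset (Finset (Fin n))}
    (hπ : IsPartition π) (i : Fin n) :
    ∃ (m : ℕ) (c : ℂ) (Y : Fin (m + 1) → A) (j : Fin (m + 1)),
      ∀ x, cumPart K (Function.update X i x) π = K m (Function.update Y j x) * c := by
  obtain ⟨V, ⟨hV, hi⟩, hu⟩ := hπ.2 i
  obtain ⟨Y, j, hY⟩ := exists_blockApply_update K X hi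
  refine ⟨V.card - 1, ∏ W ∈ π.erase V, blockApply K X W, Y, j, fun x => ?_⟩
  rw [cumPart, ← Finset.mul_prod_erase π _ hV, hY]
  congr 1
  refine Finset.prod_congr rfl fun W hW => ?_
  obtain ⟨hne, hWπ⟩ := Finset.mem_erase.mp hW
  exact blockApply_update_of_notMem K X (fun hiW => hne (hu W ⟨hWπ, hiW⟩)) x

/-- `X ↦ K_π (X)` as a multilinear functional, for a partition `π`. -/
noncomputable def cumPartMultilinear {n : ℕ} (π : Finset (Finset (Fin n)))
    (hπ : IsPartition π) : MultilinearMap ℂ (fun _ : Fin n => A) ℂ :=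
  MultilinearMap.mk' (fun X => cumPart K X π)
    (fun X i x y => by
      obtain ⟨m, c, Y, j, h⟩ := exists_cumPart_update K X hπ i
      simp only [h, MultilinearMap.map_update_add, add_mul])
    (fun X i a x => by
      obtain ⟨m, c, Y, j, h⟩ := exists_cumPart_update K X hπ i
      simp only [h, MultilinearMap.map_update_smul, smul_mul_assoc])

theorem blockApply_univ_s13 {n : ℕ} (X : Fin (n + 1) → A) :
    blockApply K X Finset.univ = K n X := by
  have key : ∀ (m : ℕ) (h : m = n) (Y : Fin (m + 1) → A),
      (∀ j, Y j = X (Fin.cast (by rw [h]) j)) → K m Y = K n X := by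
    rintro m rfl Y hY
    congr 1
    exact funext hY
  rw [blockApply, dif_pos Finset.univ_nonempty]
  refine key _ (by simp) _ fun j => ?_
  have h := Finset.orderEmbOfFin_unique (s := (Finset.univ : Finset (Fin (n + 1)))) rfl
    (f := Fin.cast (by simp)) (fun _ => Finset.mem_univ _) (fun a b hab => hab)
  exact congrArg X (congrFun h.symm _)

end

theorem isNonCrossingPartition_singleton_univ (n : ℕ) :
    IsNonCrossingPartition ({Finset.univ} : Finset (Finset (Fin (n + 1)))) := by
  refine ⟨⟨?_, fun i => ⟨Finset.univ, by simp, by simp⟩⟩, ?_⟩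
  · intro V hV
    rw [Finset.mem_singleton.mp hV]
    exact Finset.univ_nonempty
  · intro V hV W hW _ _ _ _ _ _ _ _ _ _ _
    rw [Finset.mem_singleton.mp hV, Finset.mem_singleton.mp hW]

theorem IsPartition.eq_singleton_univ {n : ℕ} {π : Finset (Finset (Fin n))}
    (hπ : IsPartition π) (h : Finset.univ ∈ π) : π = {Finset.univ} := by
  refine Finset.eq_singleton_iff_unique_mem.mpr ⟨h, fun W hW => ?_⟩
  obtain ⟨i, hi⟩ := hπ.1 W hW
  exact (hπ.2 i).unique ⟨hW, hi⟩ ⟨h, Finset.mem_univ i⟩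

/-- The blocks of a partition of `n + 1` points other than the one-block partition have at most `n`
elements, so its contribution depends only on `K m` with `m < n`. -/
theorem cumPart_congr {A : Type*} [AddCommMonoid A] [Module ℂ A]
    {K L : ∀ m : ℕ, MultilinearMap ℂ (fun _ : Fin (m + 1) => A) ℂ} {n : ℕ}
    (h : ∀ m < n, K m = L m) {π : Finset (Finset (Fin (n + 1)))} (hπ : IsPartition π)
    (hne : π ≠ {Finset.univ}) (X : Fin (n + 1) → A) : cumPart K X π = cumPart L X π := by
  refine Finset.prod_congr rfl fun V hV => ?_
  have hVu : V ≠ Finset.univ := by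
    rintro rfl
    exact hne (hπ.eq_singleton_univ hV)
  have hlt : V.card < n + 1 := by
    simpa using Finset.card_lt_card (Finset.ssubset_univ_iff.mpr hVu)
  have hpos : 0 < V.card := Finset.card_pos.mpr (hπ.1 V hV)
  unfold blockApply
  rw [h (V.card - 1) (by omega)]

/-- The non-crossing partitions of `n + 1` points with at least two blocks. -/
noncomputable def properNC (n : ℕ) : Finset (Finset (Finset (Fin (n + 1)))) :=
  (Finset.univ.filter
    (fun π : Finset (Finset (Fin (n + 1))) => IsNonCrossingPartition π)).erase {Finset.univ}

theorem mem_properNC {n : ℕ} {π : Finset (Finset (Fin (n + 1)))} :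
    π ∈ properNC n ↔ π ≠ {Finset.univ} ∧ IsNonCrossingPartition π := by
  simp [properNC]

/-- The right-hand side of the recursion for the cumulants: the moment functional minus the
contributions of the non-crossing partitions with at least two blocks. -/
noncomputable def cumulantStep {A : Type*} [Ring A] [Algebra ℂ A] (φ : A →ₗ[ℂ] ℂ)
    (K : ∀ m : ℕ, MultilinearMap ℂ (fun _ : Fin (m + 1) => A) ℂ) (n : ℕ) :
    MultilinearMap ℂ (fun _ : Fin (n + 1) => A) ℂ :=
  φ.compMultilinearMap (MultilinearMap.mkPiAlgebraFin ℂ (n + 1) A)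
    - ∑ π ∈ (properNC n).attach, cumPartMultilinear K π.1 (mem_properNC.mp π.2).2.1

theorem cumulantStep_apply {A : Type*} [Ring A] [Algebra ℂ A] (φ : A →ₗ[ℂ] ℂ)
    (K : ∀ m : ℕ, MultilinearMap ℂ (fun _ : Fin (m + 1) => A) ℂ) (n : ℕ) (X : Fin (n + 1) → A) :
    cumulantStep φ K n X = φ ((List.ofFn X).prod) - ∑ π ∈ properNC n, cumPart K X π := by
  rw [← Finset.sum_attach (properNC n)]
  simp [cumulantStep, sub_apply, sum_apply, cumPartMultilinear]

/-- The moment–cumulant formula is equivalent to the triangular system `K n = cumulantStep φ K n`. -/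
theorem moment_cumulant_iff {A : Type*} [Ring A] [Algebra ℂ A] (φ : A →ₗ[ℂ] ℂ)
    (K : ∀ m : ℕ, MultilinearMap ℂ (fun _ : Fin (m + 1) => A) ℂ) :
    (∀ (n : ℕ) (X : Fin (n + 1) → A),
        φ ((List.ofFn X).prod) =
          ∑ π ∈ Finset.univ.filter
              (fun π : Finset (Finset (Fin (n + 1))) => IsNonCrossingPartition π),
            cumPart K X π) ↔ ∀ n, K n = cumulantStep φ K n := by
  refine forall_congr' fun n => ?_
  rw [MultilinearMap.ext_iff]
  refine forall_congr' fun X => ?_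
  rw [cumulantStep_apply, ← Finset.add_sum_erase _ _ (Finset.mem_filter.mpr
    ⟨Finset.mem_univ _, isNonCrossingPartition_singleton_univ n⟩), ← properNC, cumPart,
    Finset.prod_singleton, blockApply_univ_s13, eq_sub_iff_add_eq, eq_comm]

/-- Free moment–cumulant formula: for an algebraic probability space `(A, φ)` there is a
unique family of multilinear functionals `K_n^F : Aⁿ → ℂ` (`n ≥ 1`; here `K m` is the
`(m+1)`-linear one) such that `φ(X₁ ⋯ Xₙ) = Σ_{π ∈ NC(n)} K_π^F(X₁, …, Xₙ)` for all `n ≥ 1`. -/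
theorem free_moment_cumulant_formula {A : Type*} [Ring A] [Algebra ℂ A]
    (φ : A →ₗ[ℂ] ℂ) (hφ : φ 1 = 1) :
    ∃! K : ∀ m : ℕ, MultilinearMap ℂ (fun _ : Fin (m + 1) => A) ℂ,
      ∀ (n : ℕ) (X : Fin (n + 1) → A),
        φ ((List.ofFn X).prod) =
          ∑ π ∈ Finset.univ.filter
              (fun π : Finset (Finset (Fin (n + 1))) => IsNonCrossingPartition π),
            cumPart K X π := by
  simp only [moment_cumulant_iff]
  refine existsUnique_fixed_of_local (cumulantStep φ) fun K L n h => ?_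
  ext X
  rw [cumulantStep_apply, cumulantStep_apply]
  congr 1
  refine Finset.sum_congr rfl fun π hπ => ?_
  obtain ⟨hne, hnc⟩ := mem_properNC.mp hπ
  exact cumPart_congr h hnc.1 hne X
end
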